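/- Let U be a squared four-dimensional Bessel process started at 0, and let τ₁^U := inf{ t ≥ 0 : Ū(t) − U(t) ≥ 1 }, where Ū(t) := sup_{s ∈ [0,t]} U(s). Then for every a > 0, P{ U(τ₁^U) > a } = (a+1) e^{−a}. -/

import Mathlib

open MeasureTheory ProbabilityTheory Real Set Filter

noncomputable section

variable {Ω : Type*} [MeasurableSpace Ω]

/-- A standard one-dimensional Brownian motion (indexed by `ℝ`, with the relevant
properties required for nonnegative times): starts at `0`, has continuous paths,
independent increments, and Gaussian increments of variance `t - s`. -/
structure IsStdBM (P : Measure Ω) (B : ℝ → Ω → ℝ) : Prop where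
  measurable : ∀ t : ℝ, Measurable (B t)
  start : ∀ ω, B 0 ω = 0
  cont : ∀ ω, Continuous fun t => B t ω
  indep : ∀ (n : ℕ) (t : Fin (n + 1) → ℝ), (∀ i, 0 ≤ t i) → Monotone t →
    iIndepFun
      (fun (i : Fin n) ω => B (t i.succ) ω - B (t i.castSucc) ω) P
  gauss : ∀ s t : ℝ, 0 ≤ s → s ≤ t →
    P.map (fun ω => B t ω - B s ω) = gaussianReal 0 (Real.toNNReal (t - s))

/-- A standard `d`-dimensional Brownian motion started at `0`: the coordinate
processes are independent standard one-dimensional Brownian motions. -/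
structure IsStdBMVec (d : ℕ) (P : Measure Ω) (B : ℝ → Ω → EuclideanSpace ℝ (Fin d)) : Prop where
  coord : ∀ i : Fin d, IsStdBM P (fun t ω => B t ω i)
  indepCoord : iIndepFun
    (fun (i : Fin d) ω => fun t : ℝ => B t ω i) P

/-- Last zero of `W` in `[0,1]`. -/
def lastZero (W : ℝ → Ω → ℝ) (ω : Ω) : ℝ := sSup {t ∈ Icc (0:ℝ) 1 | W t ω = 0}

/-- `m` is a standard Brownian meander: obtained from a Brownian motion `W` by
`m s = |W (g + s (1 - g))| / √(1 - g)`, where `g` is the last zero of `W` before time `1`. -/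
def IsBrownianMeander (P : Measure Ω) (m : ℝ → Ω → ℝ) : Prop :=
  ∃ W : ℝ → Ω → ℝ, IsStdBM P W ∧
    ∀ ω, ∀ s ∈ Icc (0:ℝ) 1,
      m s ω = |W (lastZero W ω + s * (1 - lastZero W ω)) ω| / Real.sqrt (1 - lastZero W ω)

/-- Running maximum `X̄(t) = sup_{s ∈ [0,t]} X(s)`. -/
def runMax (X : ℝ → Ω → ℝ) (t : ℝ) (ω : Ω) : ℝ := ⨆ s : Icc (0:ℝ) t, X s ω

/-- Maximal drawdown on `[0,T]` : `sup_{s ∈ [0,T]} (X̄(s) - X(s))`. -/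
def maxDDOn (X : ℝ → Ω → ℝ) (T : ℝ) (ω : Ω) : ℝ := ⨆ s : Icc (0:ℝ) T, (runMax X s ω - X s ω)

/-- Drawdown time `τ_λ^X := inf {t ≥ 0 : X̄(t) - X(t) ≥ λ}`. -/
def ddTime (lam : ℝ) (X : ℝ → Ω → ℝ) (ω : Ω) : ℝ :=
  sInf {t | 0 ≤ t ∧ lam ≤ runMax X t ω - X t ω}

/-- Three-dimensional Bessel process built from a 3-dimensional Brownian motion. -/
def bessel3 (β : ℝ → Ω → EuclideanSpace ℝ (Fin 3)) (t : ℝ) (ω : Ω) : ℝ := ‖β t ω‖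

/-- Squared four-dimensional Bessel process built from a 4-dimensional Brownian motion. -/
def sqBessel4 (γ : ℝ → Ω → EuclideanSpace ℝ (Fin 4)) (t : ℝ) (ω : Ω) : ℝ := ‖γ t ω‖ ^ 2

end

open scoped ENNReal

namespace DD

open scoped Topology NNReal

/-- The (truncated) test function. -/
noncomputable def Gf (x k : ℝ) : ℝ := Real.exp k * (1 - (k - 1) / max x ((k - 1) / 4))

/-- Running maximum on the grid, truncated to `[1,b]`. -/
noncomputable def Kseq (b : ℝ) (u : ℕ → ℝ) : ℕ → ℝ
  | 0 => 1
  | (j + 1) => min b (max (Kseq b u j) (u (j + 1)))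

/-- The walk has not stopped at step `j`. -/
def alive (b : ℝ) (u : ℕ → ℝ) (j : ℕ) : Prop :=
  ∀ i ≤ j, Kseq b u i < b ∧ (Kseq b u i = 1 ∨ Kseq b u i - 1 < u i)

open Classical in
/-- The stopped process. -/
noncomputable def Zseq (b : ℝ) (u : ℕ → ℝ) (N : ℕ) : ℝ :=
  Real.exp 1 + ∑ j ∈ Finset.range N,
    if alive b u j then Gf (u (j + 1)) (Kseq b u (j + 1)) - Gf (u j) (Kseq b u j) else 0

lemma Gf_one (x : ℝ) : Gf x 1 = Real.exp 1 := by simp [Gf]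

lemma ratio_bounds {x k : ℝ} (hk : 1 ≤ k) :
    0 ≤ (k - 1) / max x ((k - 1) / 4) ∧ (k - 1) / max x ((k - 1) / 4) ≤ 4 := by
  rcases hk.eq_or_lt with rfl | hk
  · simp
  · have h : 0 < (k - 1) / 4 := by linarith
    have h2 : 0 < max x ((k - 1) / 4) := lt_of_lt_of_le h (le_max_right _ _)
    refine ⟨by apply div_nonneg <;> linarith, ?_⟩
    rw [div_le_iff₀ h2]
    have := le_max_right x ((k - 1) / 4)
    linarith

lemma Gf_abs_le {x k b : ℝ} (hk : 1 ≤ k) (hb : k ≤ b) : |Gf x k| ≤ 3 * Real.exp b := by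
  obtain ⟨h1, h2⟩ := ratio_bounds (x := x) hk
  rw [Gf, abs_mul, abs_of_pos (Real.exp_pos k)]
  have : |1 - (k - 1) / max x ((k - 1) / 4)| ≤ 3 := by
    rw [abs_le]; constructor <;> linarith
  have h3 : Real.exp k ≤ Real.exp b := Real.exp_le_exp.2 hb
  nlinarith [Real.exp_pos k, abs_nonneg (1 - (k - 1) / max x ((k - 1) / 4))]

lemma Kseq_one_le {b : ℝ} (hb : 1 ≤ b) (u : ℕ → ℝ) (j : ℕ) : 1 ≤ Kseq b u j := by
  induction j with
  | zero => simp [Kseq]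
  | succ j ih => simp only [Kseq]; exact le_min hb (ih.trans (le_max_left _ _))

lemma Kseq_le {b : ℝ} (hb : 1 ≤ b) (u : ℕ → ℝ) (j : ℕ) : Kseq b u j ≤ b := by
  cases j with
  | zero => simpa [Kseq] using hb
  | succ j => exact min_le_left _ _

lemma Kseq_mono_succ {b : ℝ} (hb : 1 ≤ b) (u : ℕ → ℝ) (j : ℕ) :
    Kseq b u j ≤ Kseq b u (j + 1) :=
  le_min (Kseq_le hb u j) (le_max_left _ _)

lemma Kseq_mono {b : ℝ} (hb : 1 ≤ b) (u : ℕ → ℝ) : Monotone (Kseq b u) :=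
  monotone_nat_of_le_succ (Kseq_mono_succ hb u)

lemma Kseq_congr (b : ℝ) {u w : ℕ → ℝ} {j : ℕ} (h : ∀ i ≤ j, u i = w i) :
    Kseq b u j = Kseq b w j := by
  induction j with
  | zero => rfl
  | succ j ih =>
    simp only [Kseq]
    rw [ih fun i hi => h i (hi.trans (Nat.le_succ j)), h (j + 1) le_rfl]

lemma alive_congr (b : ℝ) {u w : ℕ → ℝ} {j : ℕ} (h : ∀ i ≤ j, u i = w i) :
    alive b u j ↔ alive b w j := by
  refine forall_congr' fun i => forall_congr' fun hi => ?_
  rw [Kseq_congr b fun l hl => h l (hl.trans hi), h i hi]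

/-- lower bound: `K` dominates the (capped) path. -/
lemma le_Kseq {b : ℝ} (hb : 1 ≤ b) {u : ℕ → ℝ} (h0 : u 0 = 0) {i j : ℕ} (hij : i ≤ j) :
    min b (u i) ≤ Kseq b u j := by
  refine le_trans ?_ (Kseq_mono hb u hij)
  cases i with
  | zero => simp [Kseq, h0]
  | succ i => exact min_le_min le_rfl (le_max_right _ _)

/-- upper bound. -/
lemma Kseq_le_of {b : ℝ} {u : ℕ → ℝ} {j : ℕ} {C : ℝ} (h1 : 1 ≤ C) (h : ∀ i ≤ j, u i ≤ C) :
    Kseq b u j ≤ C := by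
  induction j with
  | zero => simpa [Kseq] using h1
  | succ j ih =>
    exact (min_le_right _ _).trans (max_le (ih fun i hi => h i (hi.trans (Nat.le_succ j)))
      (h _ le_rfl))

/-- `K` is either 1, or `b`, or attained. -/
lemma Kseq_attained (b : ℝ) (u : ℕ → ℝ) (j : ℕ) (h1 : 1 < Kseq b u j) (h2 : Kseq b u j < b) :
    ∃ l ≤ j, u l = Kseq b u j := by
  induction j with
  | zero => simp [Kseq] at h1
  | succ j ih =>
    simp only [Kseq] at h1 h2 ⊢
    have hlt : max (Kseq b u j) (u (j+1)) < b := by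
      rcases min_lt_iff.1 h2 with h | h
      · exact absurd h (lt_irrefl _)
      · exact h
    rw [min_eq_right hlt.le] at h1 ⊢
    rcases le_total (Kseq b u j) (u (j+1)) with h | h
    · exact ⟨j+1, le_rfl, by rw [max_eq_right h]⟩
    · rw [max_eq_left h] at h1 hlt ⊢
      obtain ⟨l, hl, e⟩ := ih h1 hlt
      exact ⟨l, hl.trans (Nat.le_succ j), e⟩

lemma alive_mono {b : ℝ} {u : ℕ → ℝ} {i j : ℕ} (hij : i ≤ j) (h : alive b u j) : alive b u i :=
  fun l hl => h l (hl.trans hij)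

lemma Zseq_succ_alive {b : ℝ} {u : ℕ → ℝ} (N : ℕ) (h : ∀ j < N, alive b u j) :
    Zseq b u N = Gf (u N) (Kseq b u N) := by
  unfold Zseq
  rw [Finset.sum_congr rfl (g := fun j => Gf (u (j + 1)) (Kseq b u (j + 1)) - Gf (u j) (Kseq b u j))
    (fun j hj => by rw [if_pos (h j (Finset.mem_range.1 hj))]),
    Finset.sum_range_sub (fun j => Gf (u j) (Kseq b u j))]
  simp [Kseq, Gf_one]

lemma Zseq_eq {b : ℝ} {u : ℕ → ℝ} {i N : ℕ} (hiN : i ≤ N) (h : ∀ j < i, alive b u j)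
    (hi : ¬ alive b u i) : Zseq b u N = Gf (u i) (Kseq b u i) := by
  rw [← Zseq_succ_alive i h]
  unfold Zseq
  congr 1
  symm
  apply Finset.sum_subset (by simpa using hiN)
  intro j _ hj
  rw [if_neg]
  intro h'
  exact hi (alive_mono (by simpa using hj) h')

/-- First stopped index. -/
lemma exists_first {b : ℝ} {u : ℕ → ℝ} {j : ℕ} (hj : ¬ alive b u j) :
    ∃ i ≤ j, ¬ alive b u i ∧ ∀ l < i, alive b u l := by
  classical
  have hex : ∃ j, ¬ alive b u j := ⟨j, hj⟩
  exact ⟨Nat.find hex, Nat.find_le hj, Nat.find_spec hex,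
    fun l hl => not_not.1 (Nat.find_min hex hl)⟩

lemma not_alive_first {b : ℝ} {u : ℕ → ℝ} {i : ℕ} (hi : ¬ alive b u i)
    (h : ∀ l < i, alive b u l) :
    b ≤ Kseq b u i ∨ (Kseq b u i < b ∧ Kseq b u i ≠ 1 ∧ u i ≤ Kseq b u i - 1) := by
  by_contra hcon
  push Not at hcon
  apply hi
  intro l hl
  rcases hl.eq_or_lt with rfl | hl
  · refine ⟨hcon.1, ?_⟩
    by_contra h2
    push Not at h2
    have := hcon.2 hcon.1 h2.1
    linarith
  · exact h l hl l le_rfl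

lemma Zseq_abs_le {b : ℝ} (hb : 1 ≤ b) (u : ℕ → ℝ) (N : ℕ) :
    |Zseq b u N| ≤ 3 * Real.exp b := by
  by_cases h : ∀ j < N, alive b u j
  · rw [Zseq_succ_alive N h]
    exact Gf_abs_le (Kseq_one_le hb u N) (Kseq_le hb u N)
  · push Not at h
    obtain ⟨j, hj, hna⟩ := h
    obtain ⟨i, hij, h1, h2⟩ := exists_first hna
    rw [Zseq_eq (hij.trans hj.le) h2 h1]
    exact Gf_abs_le (Kseq_one_le hb u _) (Kseq_le hb u _)

lemma Gf_nonpos {x k : ℝ} (hk : 1 < k) (hx : x ≤ k - 1) : Gf x k ≤ 0 := by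
  unfold Gf
  have h2 : 0 < max x ((k - 1) / 4) := lt_of_lt_of_le (by linarith) (le_max_right _ _)
  have : 1 ≤ (k - 1) / max x ((k - 1) / 4) := by
    rw [le_div_iff₀ h2, one_mul]; exact max_le hx (by linarith)
  have := Real.exp_pos k
  nlinarith

/-- when the level `b` is reached for the first time. -/
lemma first_b {b : ℝ} (hb : 1 < b) {u : ℕ → ℝ} {i : ℕ} (hi : b ≤ Kseq b u i)
    (h : ∀ l < i, alive b u l) : ∃ l, i = l + 1 ∧ b ≤ u i ∧ Kseq b u i = b ∧ Kseq b u l < b := by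
  cases i with
  | zero => simp [Kseq] at hi; linarith
  | succ l =>
    have hl := (h l (Nat.lt_succ_self l) l le_rfl).1
    refine ⟨l, rfl, ?_, le_antisymm (Kseq_le hb.le u _) hi, hl⟩
    simp only [Kseq] at hi
    have := (le_min_iff.1 hi).2
    rcases le_max_iff.1 this with h' | h'
    · linarith
    · exact h'

lemma Gf_eq {x k : ℝ} (hx : (k - 1) / 4 ≤ x) : Gf x k = Real.exp k * (1 - (k - 1) / x) := by
  rw [Gf, max_eq_left hx]

lemma u_le_K {b : ℝ} (hb : 1 ≤ b) {u : ℕ → ℝ} (h0 : u 0 = 0) {i : ℕ} (h : Kseq b u i < b) :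
    u i ≤ Kseq b u i := by
  have := le_Kseq hb h0 (le_refl i)
  rcases min_le_iff.1 this with h' | h'
  · linarith
  · exact h'

/-- the second-order increment. -/
lemma Gf_incr {x k k' : ℝ} (hk : 1 ≤ k) (hkk : k ≤ k') (hx : k' ≤ x) :
    0 ≤ Gf x k' - Gf x k ∧ Gf x k' - Gf x k ≤ Real.exp k' * ((k' - k) * ((x - k) / x)) := by
  have hx0 : 0 < x := by linarith
  rw [Gf_eq (by linarith), Gf_eq (by linarith)]
  have e1 : Real.exp k' * (1 - (k' - 1) / x) - Real.exp k * (1 - (k - 1) / x)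
      = (Real.exp k' * (x - k' + 1) - Real.exp k * (x - k + 1)) / x := by
    field_simp; ring
  rw [e1]
  have e2 : Real.exp k' * ((k' - k) * ((x - k) / x)) = (Real.exp k' * ((k' - k) * (x - k))) / x := by
    field_simp
  rw [e2]
  have a1 : Real.exp k * (1 + (k' - k)) ≤ Real.exp k' := by
    have := Real.add_one_le_exp (k' - k)
    have e : Real.exp k' = Real.exp k * Real.exp (k' - k) := by rw [← Real.exp_add]; ring_nf
    rw [e]; nlinarith [Real.exp_pos k]
  have a2 : Real.exp k' * (1 - (k' - k)) ≤ Real.exp k := by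
    have := Real.add_one_le_exp (-(k' - k))
    have e : Real.exp k = Real.exp k' * Real.exp (-(k' - k)) := by rw [← Real.exp_add]; ring_nf
    rw [e]; nlinarith [Real.exp_pos k']
  have p := Real.exp_pos k
  have p' := Real.exp_pos k'
  constructor
  · apply div_nonneg _ hx0.le
    have : (Real.exp k * (1 + (k' - k))) * (x - k' + 1) ≤ Real.exp k' * (x - k' + 1) :=
      mul_le_mul_of_nonneg_right a1 (by linarith)
    nlinarith [mul_nonneg p.le (mul_nonneg (sub_nonneg.2 hkk) (sub_nonneg.2 hx))]
  · apply div_le_div_of_nonneg_right _ hx0.le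
    have : (Real.exp k' * (1 - (k' - k))) * (x - k + 1) ≤ Real.exp k * (x - k + 1) :=
      mul_le_mul_of_nonneg_right a2 (by linarith)
    nlinarith

end DD

namespace DD

open scoped Topology NNReal

/-- Path sampled on the grid of mesh `1/n`. -/
noncomputable def smp (f : ℝ → ℝ) (n : ℕ) (j : ℕ) : ℝ := f ((j : ℝ) / n)

lemma smp_zero {f : ℝ → ℝ} (h0 : f 0 = 0) (n : ℕ) : smp f n 0 = 0 := by simp [smp, h0]

lemma tendsto_grid {t : ℝ} (ht : 0 ≤ t) :
    Tendsto (fun n : ℕ => ((⌊t * n⌋₊ : ℕ) : ℝ) / n) atTop (𝓝 t) :=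
  (tendsto_nat_floor_mul_div_atTop ht).comp tendsto_natCast_atTop_atTop

lemma tendsto_smp {f : ℝ → ℝ} (hf : Continuous f) {t : ℝ} (ht : 0 ≤ t) :
    Tendsto (fun n : ℕ => smp f n ⌊t * n⌋₊) atTop (𝓝 (f t)) :=
  (hf.tendsto t).comp (tendsto_grid ht)

lemma grid_le {t : ℝ} (ht : 0 ≤ t) (n : ℕ) : ((⌊t * n⌋₊ : ℕ) : ℝ) / n ≤ t := by
  rcases Nat.eq_zero_or_pos n with rfl | hn
  · simpa using ht
  · have : (0 : ℝ) < n := by exact_mod_cast hn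
    rw [div_le_iff₀ this]
    exact Nat.floor_le (by positivity)

lemma grid_close {t : ℝ} {n : ℕ} (hn : 0 < n) :
    t - 1 / n ≤ ((⌊t * n⌋₊ : ℕ) : ℝ) / n := by
  have h : (0 : ℝ) < n := by exact_mod_cast hn
  rw [le_div_iff₀ h, sub_mul, one_div, inv_mul_cancel₀ h.ne']
  have := Nat.lt_floor_add_one (t * n)
  linarith

lemma eventually_floor_le {t : ℝ} : ∀ᶠ n : ℕ in atTop, ⌊t * n⌋₊ ≤ n ^ 2 := by
  filter_upwards [tendsto_natCast_atTop_atTop.eventually_ge_atTop t] with n hn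
  apply Nat.floor_le_of_le
  push_cast
  have : (0 : ℝ) ≤ n := Nat.cast_nonneg n
  nlinarith

lemma osc {f : ℝ → ℝ} (hf : Continuous f) (T : ℝ) {η : ℝ} (hη : 0 < η) :
    ∀ᶠ n : ℕ in atTop, ∀ s t : ℝ, s ∈ Icc 0 T → t ∈ Icc 0 T → |s - t| ≤ 1 / n →
      |f s - f t| < η := by
  have hu := (isCompact_Icc (a := (0 : ℝ)) (b := T)).uniformContinuousOn_of_continuous
    hf.continuousOn
  rw [Metric.uniformContinuousOn_iff] at hu
  obtain ⟨δ, hδ, h⟩ := hu η hη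
  have ht : Tendsto (fun n : ℕ => 1 / (n : ℝ)) atTop (𝓝 0) := tendsto_one_div_atTop_nhds_zero_nat
  filter_upwards [ht.eventually_lt_const hδ] with n hn s t hs ht hst
  have := h s hs t ht (by rw [Real.dist_eq]; linarith)
  rwa [Real.dist_eq] at this

/-- Consecutive grid values are close. -/
lemma osc_succ {f : ℝ → ℝ} (hf : Continuous f) (T : ℝ) {η : ℝ} (hη : 0 < η) :
    ∀ᶠ n : ℕ in atTop, ∀ l : ℕ, (l : ℝ) / n ≤ T → |smp f n (l + 1) - smp f n l| < η := by
  filter_upwards [osc hf (T + 1) hη, eventually_gt_atTop 0] with n hn hn0 l hl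
  have h : (1 : ℝ) ≤ n := by exact_mod_cast hn0
  have h1 : (1 : ℝ) / n ≤ 1 := by rw [div_le_one (by linarith)]; exact h
  have h2 : (0 : ℝ) ≤ (l : ℝ) / n := by positivity
  have h4 : (0 : ℝ) ≤ 1 / n := by positivity
  have h3 : ((l + 1 : ℕ) : ℝ) / n = (l : ℝ) / n + 1 / n := by push_cast; ring
  refine hn _ _ ⟨?_, ?_⟩ ⟨h2, by linarith⟩ ?_
  · rw [h3]; linarith
  · rw [h3]; linarith
  · rw [h3]; simp

lemma not_alive_of_gt {b : ℝ} (hb : 1 ≤ b) {u : ℕ → ℝ} (h0 : u 0 = 0) {j : ℕ} (h : b ≤ u j) :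
    ¬ alive b u j := by
  intro ha
  have := le_Kseq hb h0 (le_refl j)
  rw [min_eq_left h] at this
  linarith [(ha j le_rfl).1]

lemma reach_at {f : ℝ → ℝ} (hf : Continuous f) (h0 : f 0 = 0) {b : ℝ} (hb : 1 < b) {T : ℝ}
    (hT : 0 ≤ T) (hfT : b < f T) :
    ∀ᶠ n : ℕ in atTop, ∃ i ≤ n ^ 2, (i : ℝ) / n ≤ T ∧ ¬ alive b (smp f n) i ∧
      ∀ l < i, alive b (smp f n) l := by
  filter_upwards [(tendsto_smp hf hT).eventually_const_lt hfT, eventually_floor_le (t := T)]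
    with n h1 h2
  obtain ⟨i, hi, h3, h4⟩ := exists_first (not_alive_of_gt hb.le (smp_zero h0 n) h1.le)
  refine ⟨i, hi.trans h2, le_trans ?_ (grid_le hT n), h3, h4⟩
  gcongr

/-- PB -/
lemma path_lower {f : ℝ → ℝ} (hf : Continuous f) (h0 : f 0 = 0) {b : ℝ} (hb : 1 < b)
    {s t : ℝ} (hs : 0 ≤ s) (hst : s ≤ t) (hd : 1 < f s - f t)
    (hpos : ∀ r, 0 ≤ f r) (C : ℝ) (hCb : C < b) (hC : ∀ r, 0 ≤ r → r ≤ t → f r ≤ C) :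
    ∀ᶠ n : ℕ in atTop, Zseq b (smp f n) (n ^ 2) ≤ 0 := by
  have ht : 0 ≤ t := hs.trans hst
  have hd' := ((tendsto_smp hf hs).sub (tendsto_smp hf ht)).eventually_const_lt hd
  filter_upwards [hd', eventually_floor_le (t := t)] with n h1 h2
  set u := smp f n with hu
  have hu0 : u 0 = 0 := smp_zero h0 n
  have hle : ∀ i ≤ ⌊t * n⌋₊, u i ≤ max 1 C := by
    intro i hi
    apply le_max_of_le_right
    apply hC _ (by positivity)
    refine le_trans ?_ (grid_le ht n)
    gcongr
  have hK : ∀ i ≤ ⌊t * n⌋₊, Kseq b u i < b := fun i hi =>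
    (Kseq_le_of (le_max_left _ _) fun l hl => hle l (hl.trans hi)).trans_lt (max_lt hb hCb)
  have hsl : ⌊s * n⌋₊ ≤ ⌊t * n⌋₊ := Nat.floor_mono (by gcongr)
  have hna : ¬ alive b u ⌊t * n⌋₊ := by
    intro ha
    have := le_Kseq hb.le hu0 hsl
    have hlt := hK _ le_rfl
    have h3 : u ⌊s * n⌋₊ ≤ Kseq b u ⌊t * n⌋₊ := by
      rcases min_le_iff.1 this with h | h
      · linarith
      · exact h
    have hp : 0 ≤ u ⌊t * n⌋₊ := hpos _
    rcases (ha _ le_rfl).2 with h | h <;> linarith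
  obtain ⟨i, hi, h3, h4⟩ := exists_first hna
  rw [Zseq_eq (hi.trans h2) h4 h3]
  rcases not_alive_first h3 h4 with h | ⟨h5, h6, h7⟩
  · linarith [hK i hi]
  · exact Gf_nonpos (lt_of_le_of_ne (Kseq_one_le hb.le u i) (Ne.symm h6)) h7

/-- PC -/
lemma path_lower' {f : ℝ → ℝ} (hf : Continuous f) (h0 : f 0 = 0) {b : ℝ} (hb : 1 < b) {T : ℝ}
    (hT : 0 ≤ T) (hfT : b < f T) {η : ℝ} (hη : 0 < η) :
    ∀ᶠ n : ℕ in atTop, Zseq b (smp f n) (n ^ 2) ≤ Real.exp b / b + η := by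
  have hη' : 0 < η / Real.exp b := by positivity
  filter_upwards [reach_at hf h0 hb hT hfT, osc_succ hf T hη'] with n ⟨i, hi, hiT, h3, h4⟩ ho
  rw [Zseq_eq hi h4 h3]
  have hpos : 0 < Real.exp b / b := by positivity
  rcases not_alive_first h3 h4 with h | ⟨h5, h6, h7⟩
  · obtain ⟨l, rfl, hbu, hK, hKl⟩ := first_b hb h h4
    have hul := u_le_K hb.le (smp_zero h0 n) hKl
    have hol := (abs_lt.1 (ho l (le_trans (by gcongr; omega) hiT))).2
    rw [hK, Gf_eq (by linarith)]
    set x := smp f n (l + 1)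
    have hx : 0 < x := by linarith
    have hxb : x ≤ b + η / Real.exp b := by linarith
    have e1 : Real.exp b * (1 - (b - 1) / x) = Real.exp b / b + Real.exp b * (b-1) * ((x - b) / (x * b)) := by
      field_simp; ring
    rw [e1]
    have : Real.exp b * (b-1) * ((x - b) / (x * b)) ≤ η := by
      have h1 : (b - 1) * ((x - b) / (x * b)) ≤ η / Real.exp b := by
        rw [← mul_div_assoc, div_le_iff₀ (by positivity)]
        have : (b - 1) * (x - b) ≤ (x * b) * (x - b) :=
          mul_le_mul_of_nonneg_right (by nlinarith) (by linarith)
        have : (x * b) * (x - b) ≤ (x * b) * (η / Real.exp b) :=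
          mul_le_mul_of_nonneg_left (by linarith) (by positivity)
        linarith
      calc _ = Real.exp b * ((b-1) * ((x - b) / (x * b))) := by ring
        _ ≤ Real.exp b * (η / Real.exp b) := by gcongr
        _ = η := by field_simp
    linarith
  · have := Gf_nonpos (lt_of_le_of_ne (Kseq_one_le hb.le _ i) (Ne.symm h6)) h7
    linarith

lemma Gf_ge_of_ge {b x : ℝ} (hb : 1 < b) (hx : b ≤ x) : Real.exp b / b ≤ Gf x b := by
  rw [Gf_eq (by linarith)]
  have : (b - 1) / x ≤ (b - 1) / b := by gcongr
  have e : Real.exp b / b = Real.exp b * (1 - (b - 1) / b) := by field_simp; ring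
  rw [e]; gcongr

/-- PD -/
lemma path_upper {f : ℝ → ℝ} (hf : Continuous f) (h0 : f 0 = 0) {b : ℝ} (hb : 1 < b) {T : ℝ}
    (hT : 0 ≤ T) (hfT : b < f T) (hd : ∀ s t, 0 ≤ s → s ≤ t → t ≤ T → f s - f t < 1) :
    ∀ᶠ n : ℕ in atTop, Real.exp b / b ≤ Zseq b (smp f n) (n ^ 2) := by
  filter_upwards [reach_at hf h0 hb hT hfT] with n ⟨i, hi, hiT, h3, h4⟩
  rw [Zseq_eq hi h4 h3]
  rcases not_alive_first h3 h4 with h | ⟨h5, h6, h7⟩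
  · obtain ⟨l, rfl, hbu, hK, hKl⟩ := first_b hb h h4
    rw [hK]
    exact Gf_ge_of_ge hb hbu
  · exfalso
    have hK1 := lt_of_le_of_ne (Kseq_one_le hb.le _ i) (Ne.symm h6)
    obtain ⟨l, hl, e⟩ := Kseq_attained b _ i hK1 h5
    have := hd ((l : ℝ) / n) ((i : ℝ) / n) (by positivity) (by gcongr) hiT
    simp only [smp] at e h7
    linarith

/-- PE -/
lemma path_upper' {f : ℝ → ℝ} (hf : Continuous f) (h0 : f 0 = 0) {b : ℝ} (hb : 1 < b) {T : ℝ}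
    (hT : 0 ≤ T) (hfT : b < f T) {ε : ℝ} (hε : 0 < ε)
    (hd : ∀ s t, 0 ≤ s → s ≤ t → 1 ≤ f s - f t → ∃ r, 0 ≤ r ∧ r ≤ t ∧ 1 + ε ≤ f r)
    {η : ℝ} (hη : 0 < η) :
    ∀ᶠ n : ℕ in atTop, -η ≤ Zseq b (smp f n) (n ^ 2) := by
  set κ : ℝ := min (ε / 4) (η * ε / (4 * Real.exp b)) with hκ
  have hκ0 : 0 < κ := by positivity
  filter_upwards [reach_at hf h0 hb hT hfT, osc_succ hf T hκ0, osc hf T hκ0, eventually_gt_atTop 0]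
    with n ⟨i, hi, hiT, h3, h4⟩ ho ho' hn0
  rw [Zseq_eq hi h4 h3]
  have hpos : 0 < Real.exp b / b := by positivity
  have hn : (0 : ℝ) < n := by exact_mod_cast hn0
  rcases not_alive_first h3 h4 with h | ⟨h5, h6, h7⟩
  · obtain ⟨l, rfl, hbu, hK, hKl⟩ := first_b hb h h4
    rw [hK]
    have := Gf_ge_of_ge hb hbu
    linarith
  · have hK1 := lt_of_le_of_ne (Kseq_one_le hb.le _ i) (Ne.symm h6)
    obtain ⟨l, hl, e⟩ := Kseq_attained b _ i hK1 h5
    have h8 : 1 ≤ f ((l : ℝ) / n) - f ((i : ℝ) / n) := by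
      simp only [smp] at e h7 ⊢
      linarith
    obtain ⟨r, hr0, hri, hr⟩ := hd _ _ (by positivity) (by gcongr) h8
    -- lower bound for K
    have hKlow : 1 + ε / 2 ≤ Kseq b (smp f n) i := by
      have hfl : ⌊r * n⌋₊ ≤ i := by
        apply Nat.floor_le_of_le
        rwa [le_div_iff₀ hn] at hri
      have h9 := le_Kseq hb.le (smp_zero h0 n) hfl
      have h10 : smp f n ⌊r * n⌋₊ ≤ Kseq b (smp f n) i := by
        rcases min_le_iff.1 h9 with h | h
        · linarith
        · exact h
      have h11 := grid_le hr0 n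
      have h12 := grid_close (t := r) hn0
      have h13 := ho' r (((⌊r * n⌋₊ : ℕ) : ℝ) / n) ⟨hr0, hri.trans hiT⟩
        ⟨by positivity, h11.trans (hri.trans hiT)⟩ (by rw [abs_of_nonneg] <;> linarith)
      have h14 := (abs_lt.1 h13).2
      have h15 : κ ≤ ε / 4 := min_le_left _ _
      simp only [smp] at h10 ⊢
      linarith
    -- the previous step
    cases i with
    | zero => simp [Kseq] at h6
    | succ i =>
      set u := smp f n
      have hal := h4 i (Nat.lt_succ_self i) i le_rfl
      have hKK : Kseq b u (i+1) = Kseq b u i := by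
        have hdef : Kseq b u (i+1) = min b (max (Kseq b u i) (u (i+1))) := rfl
        have hm : max (Kseq b u i) (u (i+1)) < b := by
          rw [hdef] at h5
          rcases min_lt_iff.1 h5 with h | h
          · exact absurd h (lt_irrefl _)
          · exact h
        rw [min_eq_right hm.le] at hdef
        rcases le_total (Kseq b u i) (u (i+1)) with h | h
        · rw [max_eq_right h] at hdef; linarith
        · rw [max_eq_left h] at hdef; exact hdef
      rw [hKK] at h6 hKlow hK1 ⊢
      have hui : Kseq b u i - 1 < u i := by
        rcases hal.2 with h | h
        · exact absurd h h6
        · exact h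
      have hol := (abs_lt.1 (ho i (le_trans (by gcongr; omega) hiT))).1
      set k := Kseq b u i
      have h15 : κ ≤ ε / 4 := min_le_left _ _
      have hx : k - 1 - κ < u (i+1) := by
        have : u (i+1) - u i = smp f n (i+1) - smp f n i := rfl
        linarith
      have hx4 : (k-1)/4 ≤ u (i+1) := by linarith
      rw [Gf_eq hx4]
      set x := u (i+1)
      have hx0 : ε / 4 < x := by linarith
      have hx00 : 0 < x := by linarith
      have e1 : 1 - (k - 1) / x = -((k - 1 - x) / x) := by field_simp; ring
      rw [e1, mul_neg, neg_le_neg_iff]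
      have h16 : κ ≤ η * ε / (4 * Real.exp b) := min_le_right _ _
      have h17 : (k - 1 - x) / x ≤ η / Real.exp b := by
        rw [div_le_iff₀ hx00]
        calc k - 1 - x ≤ κ := by linarith
          _ ≤ η * ε / (4 * Real.exp b) := h16
          _ = η / Real.exp b * (ε / 4) := by field_simp
          _ ≤ η / Real.exp b * x := by gcongr
      have hkb : k ≤ b := hal.1.le
      rcases le_or_gt ((k - 1 - x) / x) 0 with hneg | hp
      · have := mul_nonpos_of_nonneg_of_nonpos (Real.exp_pos k).le hneg
        linarith
      · calc Real.exp k * ((k - 1 - x) / x) ≤ Real.exp b * ((k - 1 - x) / x) := by gcongr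
          _ ≤ Real.exp b * (η / Real.exp b) := by gcongr
          _ = η := by field_simp

open Classical in
/-- The sum of second-order terms. -/
noncomputable def Rseq (b : ℝ) (u : ℕ → ℝ) (N : ℕ) : ℝ :=
  ∑ j ∈ Finset.range N,
    if alive b u j then Gf (u (j + 1)) (Kseq b u (j + 1)) - Gf (u (j + 1)) (Kseq b u j) else 0

lemma R_term {b : ℝ} (hb : 1 ≤ b) {u : ℕ → ℝ} (h0 : u 0 = 0) {j : ℕ} (h : alive b u j) :
    0 ≤ Gf (u (j + 1)) (Kseq b u (j + 1)) - Gf (u (j + 1)) (Kseq b u j) ∧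
    Gf (u (j + 1)) (Kseq b u (j + 1)) - Gf (u (j + 1)) (Kseq b u j) ≤
      Real.exp b * (Kseq b u (j+1) - Kseq b u j) * min 1 |u (j+1) - u j| := by
  have hK1 := Kseq_one_le hb u j
  have hKs := Kseq_mono_succ hb u j
  rcases le_or_gt (u (j+1)) (Kseq b u j) with hle | hgt
  · have e : Kseq b u (j+1) = Kseq b u j := by
      simp only [Kseq]
      rw [max_eq_left hle, min_eq_right (Kseq_le hb u j)]
    rw [e]; simp
  · have hx : Kseq b u (j+1) ≤ u (j+1) := by
      simp only [Kseq]
      rw [max_eq_right hgt.le]; exact min_le_right _ _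
    obtain ⟨h1, h2⟩ := Gf_incr hK1 hKs hx
    refine ⟨h1, h2.trans ?_⟩
    have hu : u j ≤ Kseq b u j := u_le_K hb h0 (h j le_rfl).1
    have hx0 : 0 < u (j+1) := by linarith
    have h3 : (u (j+1) - Kseq b u j) / u (j+1) ≤ min 1 |u (j+1) - u j| := by
      apply le_min
      · rw [div_le_one hx0]; linarith
      · rw [div_le_iff₀ hx0]
        have := le_abs_self (u (j+1) - u j)
        nlinarith [abs_nonneg (u (j+1) - u j)]
    have h4 : Real.exp (Kseq b u (j+1)) ≤ Real.exp b := Real.exp_le_exp.2 (Kseq_le hb u _)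
    have h5 : 0 ≤ Kseq b u (j+1) - Kseq b u j := by linarith
    have h6 : 0 ≤ (u (j+1) - Kseq b u j) / u (j+1) := div_nonneg (by linarith) hx0.le
    rw [mul_assoc]
    exact mul_le_mul h4 (mul_le_mul_of_nonneg_left h3 h5) (mul_nonneg h5 h6) (Real.exp_pos b).le

lemma R_bound {b : ℝ} (hb : 1 ≤ b) {u : ℕ → ℝ} (h0 : u 0 = 0) (N : ℕ) {c : ℝ} (hc0 : 0 ≤ c)
    (hc : ∀ j, alive b u j → min 1 |u (j+1) - u j| ≤ c) :
    0 ≤ Rseq b u N ∧ Rseq b u N ≤ Real.exp b * b * c := by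
  classical
  constructor
  · apply Finset.sum_nonneg
    intro j _
    split_ifs with h
    · exact (R_term hb h0 h).1
    · exact le_rfl
  · have h1 : Rseq b u N ≤ ∑ j ∈ Finset.range N,
        Real.exp b * c * (Kseq b u (j+1) - Kseq b u j) := by
      apply Finset.sum_le_sum
      intro j _
      have h5 : 0 ≤ Kseq b u (j+1) - Kseq b u j := by linarith [Kseq_mono_succ hb u j]
      split_ifs with h
      · refine (R_term hb h0 h).2.trans ?_
        have := mul_le_mul_of_nonneg_left (hc j h)
          (mul_nonneg (Real.exp_pos b).le h5)
        linarith
      · positivity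
    rw [← Finset.mul_sum, Finset.sum_range_sub] at h1
    refine h1.trans ?_
    have h2 := Kseq_le hb u N
    have h3 := Kseq_one_le hb u 0
    have : Real.exp b * c * (Kseq b u N - Kseq b u 0) ≤ Real.exp b * c * b :=
      mul_le_mul_of_nonneg_left (by linarith) (by positivity)
    linarith

/-- PF -/
lemma path_R {f : ℝ → ℝ} (hf : Continuous f) (h0 : f 0 = 0) {b : ℝ} (hb : 1 < b) {T : ℝ}
    (hT : 0 ≤ T) (hfT : b < f T) :
    Tendsto (fun n : ℕ => Rseq b (smp f n) (n ^ 2)) atTop (𝓝 0) := by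
  rw [Metric.tendsto_atTop']
  intro η hη
  have hη' : 0 < η / (2 * (Real.exp b * b)) := by positivity
  have key := (reach_at hf h0 hb hT hfT).and (osc_succ hf T hη')
  obtain ⟨N, hN⟩ := eventually_atTop.1 key
  refine ⟨N, fun n hn => ?_⟩
  obtain ⟨⟨i, hi, hiT, h3, h4⟩, ho⟩ := hN n hn.le
  obtain ⟨h5, h6⟩ := R_bound hb.le (smp_zero h0 n) (n^2) hη'.le (fun j hj => by
    have hji : j ≤ i := by
      by_contra hcon
      exact h3 (alive_mono (by omega) hj)
    exact (min_le_right _ _).trans (ho j (le_trans (by gcongr) hiT)).le)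
  rw [Real.dist_eq, sub_zero, abs_of_nonneg h5]
  refine h6.trans_lt ?_
  have : Real.exp b * b * (η / (2 * (Real.exp b * b))) = η / 2 := by field_simp
  rw [this]; linarith

end DD

namespace DD

open scoped Topology NNReal

/-- Squared Euclidean norm. -/
def sqn (x : Fin 4 → ℝ) : ℝ := ∑ i, x i ^ 2

lemma sqn_nonneg (x : Fin 4 → ℝ) : 0 ≤ sqn x := Finset.sum_nonneg fun i _ => sq_nonneg _

lemma sqn_cont : Continuous sqn := by unfold sqn; fun_prop

lemma sqn_meas : Measurable sqn := sqn_cont.measurable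

/-- The law of the increments. -/
noncomputable def nu (v : ℝ≥0) : Measure (Fin 4 → ℝ) := Measure.pi fun _ => gaussianReal 0 v

instance (v : ℝ≥0) : IsProbabilityMeasure (nu v) := by unfold nu; infer_instance

lemma gauss1 {v : ℝ≥0} (hv : v ≠ 0) {l : ℝ} (hl : 0 ≤ l) (x : ℝ) :
    ∫ z, Real.exp (-l * (x + z) ^ 2) ∂(gaussianReal 0 v)
      = (√(1 + 2 * l * v))⁻¹ * Real.exp (-l * x ^ 2 / (1 + 2 * l * v)) := by
  have hv0 : (0 : ℝ) < v := by
    have : 0 < v := pos_iff_ne_zero.2 hv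
    exact_mod_cast this
  rw [integral_gaussianReal_eq_integral_smul hv]
  have hD : 0 < 1 + 2 * l * v := by positivity
  set β : ℝ := (1 + 2 * l * v) / (2 * v) with hβ
  have hβ0 : 0 < β := by positivity
  have e : ∀ z : ℝ, gaussianPDFReal 0 v z • Real.exp (-l * (x + z) ^ 2)
      = ((√(2 * π * v))⁻¹ * Real.exp (-l * x ^ 2 / (1 + 2 * l * v))) *
        Real.exp (-β * (z + l * x / β) ^ 2) := by
    intro z
    have e0 : -(z - 0) ^ 2 / (2 * (v : ℝ)) + -l * (x + z) ^ 2
        = -l * x ^ 2 / (1 + 2 * l * v) + -β * (z + l * x / β) ^ 2 := by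
      rw [hβ]; field_simp; ring
    rw [gaussianPDFReal, smul_eq_mul, mul_assoc (√(2 * π * v))⁻¹, mul_assoc (√(2 * π * v))⁻¹,
      ← Real.exp_add, ← Real.exp_add, e0]
  simp_rw [e]
  rw [integral_const_mul, integral_add_right_eq_self (fun z => Real.exp (-β * z ^ 2)),
    integral_gaussian]
  have e2 : (√(2 * π * v))⁻¹ * √(π / β) = (√(1 + 2 * l * v))⁻¹ := by
    rw [← Real.sqrt_inv, ← Real.sqrt_inv, ← Real.sqrt_mul (by positivity)]
    congr 1
    rw [hβ]; field_simp
  rw [← e2]; ring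

lemma gauss4 {v : ℝ≥0} (hv : v ≠ 0) {l : ℝ} (hl : 0 ≤ l) (x : Fin 4 → ℝ) :
    ∫ z, Real.exp (-l * sqn (x + z)) ∂(nu v)
      = ((1 + 2 * l * v) ^ 2)⁻¹ * Real.exp (-l * sqn x / (1 + 2 * l * v)) := by
  have hD : 0 ≤ 1 + 2 * l * v := by positivity
  have e : ∀ z : Fin 4 → ℝ, Real.exp (-l * sqn (x + z)) =
      ∏ i, (fun (i : Fin 4) (y : ℝ) => Real.exp (-l * (x i + y) ^ 2)) i (z i) := by
    intro z
    rw [← Real.exp_sum, sqn, Finset.mul_sum]; rfl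
  have e3 : ∫ z, Real.exp (-l * sqn (x + z)) ∂(nu v)
      = ∏ i, ∫ y, Real.exp (-l * (x i + y) ^ 2) ∂(gaussianReal 0 v) :=
    (integral_congr_ae (ae_of_all _ e)).trans
      (integral_fintype_prod_eq_prod (μ := fun _ : Fin 4 => gaussianReal 0 v)
        (fun (i : Fin 4) (y : ℝ) => Real.exp (-l * (x i + y) ^ 2)))
  rw [e3]
  simp_rw [gauss1 hv hl]
  rw [Finset.prod_mul_distrib, ← Real.exp_sum, Finset.prod_const, ← Finset.sum_div,
    ← Finset.mul_sum]
  congr 1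
  simp only [Finset.card_univ, Fintype.card_fin]
  rw [inv_pow]
  congr 1
  calc √(1 + 2 * l * v) ^ 4 = (√(1 + 2 * l * v) ^ 2) ^ 2 := by ring
    _ = _ := by rw [Real.sq_sqrt hD]

/-- Truncated Laplace representation of `1 / y`. -/
noncomputable def psi (L y : ℝ) : ℝ := ∫ l in (0 : ℝ)..L, Real.exp (-l * y)

lemma psi_eq {L y : ℝ} (hy : 0 < y) : psi L y = (1 - Real.exp (-L * y)) / y := by
  unfold psi
  rw [intervalIntegral.integral_eq_sub_of_hasDerivAt (f := fun l => -(Real.exp (-l * y)) / y)]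
  · field_simp; simp; ring
  · intro l _
    have h : HasDerivAt (fun l : ℝ => Real.exp (-l * y)) (Real.exp (-l * y) * (-1 * y)) l :=
      ((hasDerivAt_id l).neg.mul_const y).exp
    have h2 := h.neg.div_const y
    have e : -(Real.exp (-l * y) * (-1 * y)) / y = Real.exp (-l * y) := by field_simp
    rw [e] at h2
    exact h2
  · exact (by fun_prop : Continuous fun l : ℝ => Real.exp (-l * y)).intervalIntegrable _ _

lemma psi_anti {L y y' : ℝ} (hL : 0 ≤ L) (h : y ≤ y') : psi L y' ≤ psi L y := by
  apply intervalIntegral.integral_mono_on hL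
  · exact (by fun_prop : Continuous fun l : ℝ => Real.exp (-l * y')).intervalIntegrable _ _
  · exact (by fun_prop : Continuous fun l : ℝ => Real.exp (-l * y)).intervalIntegrable _ _
  · intro l hl
    apply Real.exp_le_exp.2
    nlinarith [hl.1]

lemma psi_zero (L : ℝ) : psi L 0 = L := by simp [psi]

lemma psi_cont (L : ℝ) : Continuous (psi L) := by
  unfold psi
  apply intervalIntegral.continuous_parametric_intervalIntegral_of_continuous'
  fun_prop

lemma psi_nonneg {L : ℝ} (hL : 0 ≤ L) (y : ℝ) : 0 ≤ psi L y :=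
  intervalIntegral.integral_nonneg hL fun _ _ => (Real.exp_pos _).le

lemma integrable_bdd {α : Type*} [MeasurableSpace α] {μ : Measure α} [IsFiniteMeasure μ]
    {f : α → ℝ} (hf : Measurable f) {C : ℝ} (h : ∀ x, |f x| ≤ C) : Integrable f μ :=
  Integrable.of_bound hf.aestronglyMeasurable C (ae_of_all _ h)

lemma psi_lap {v : ℝ≥0} (hv : v ≠ 0) {L : ℝ} (hL : 0 ≤ L) {x : Fin 4 → ℝ} (hx : 0 < sqn x) :
    ∫ z, psi L (sqn (x + z)) ∂(nu v)
      = (1 - Real.exp (-L * sqn x / (1 + 2 * L * v))) / sqn x := by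
  unfold psi
  have hswap : ∫ z, (∫ l in (0 : ℝ)..L, Real.exp (-l * sqn (x + z))) ∂(nu v)
      = ∫ l in (0 : ℝ)..L, (∫ z, Real.exp (-l * sqn (x + z)) ∂(nu v)) := by
    simp_rw [intervalIntegral.integral_of_le hL]
    apply integral_integral_swap
    have hc : Continuous (Function.uncurry fun (z : Fin 4 → ℝ) (l : ℝ) =>
        Real.exp (-l * sqn (x + z))) := by
      have := sqn_cont
      simp only [Function.uncurry_def]
      fun_prop
    apply Integrable.of_bound hc.measurable.aestronglyMeasurable 1
    have h1 : ∀ᵐ p ∂((nu v).prod (volume.restrict (Ioc 0 L))), p.2 ∈ Ioc 0 L := by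
      have := Measure.quasiMeasurePreserving_snd (μ := nu v) (ν := volume.restrict (Ioc 0 L))
      exact this.ae (ae_restrict_mem measurableSet_Ioc)
    filter_upwards [h1] with p hp
    simp only [Function.uncurry_def]
    rw [Real.norm_eq_abs, abs_of_pos (Real.exp_pos _), Real.exp_le_one_iff]
    nlinarith [hp.1, sqn_nonneg (x + p.1)]
  rw [hswap]
  have hcongr : ∫ l in (0 : ℝ)..L, (∫ z, Real.exp (-l * sqn (x + z)) ∂(nu v))
      = ∫ l in (0 : ℝ)..L, ((1 + 2 * l * v) ^ 2)⁻¹ * Real.exp (-l * sqn x / (1 + 2 * l * v)) := by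
    apply intervalIntegral.integral_congr
    intro l hl
    rw [uIcc_of_le hL] at hl
    exact gauss4 hv hl.1 x
  rw [hcongr, intervalIntegral.integral_eq_sub_of_hasDerivAt
    (f := fun l => -(Real.exp (-l * sqn x / (1 + 2 * l * v))) / sqn x)]
  · simp; ring
  · intro l hl
    rw [uIcc_of_le hL] at hl
    have hD : 0 < 1 + 2 * l * v := by have := hl.1; positivity
    have h1 : HasDerivAt (fun l : ℝ => -l * sqn x) (-1 * sqn x) l :=
      (hasDerivAt_id l).neg.mul_const _
    have h2 : HasDerivAt (fun l : ℝ => 1 + 2 * l * v) (2 * 1 * v) l :=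
      (((hasDerivAt_id l).const_mul 2).mul_const _).const_add 1
    have h4 : HasDerivAt (fun l : ℝ => -l * sqn x / (1 + 2 * l * v)) _ l := h1.div h2 hD.ne'
    have h3 : HasDerivAt (fun l : ℝ => -(Real.exp (-l * sqn x / (1 + 2 * l * v))) / sqn x) _ l :=
      (h4.exp.neg).div_const (sqn x)
    have e : ((1 + 2 * l * v) ^ 2)⁻¹ * Real.exp (-l * sqn x / (1 + 2 * l * v))
       = -(Real.exp (-l * sqn x / (1 + 2 * l * v)) * ((-1 * sqn x * (1 + 2 * l * v)
          - -l * sqn x * (2 * 1 * v)) / (1 + 2 * l * v) ^ 2)) / sqn x := by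
      generalize Real.exp (-l * sqn x / (1 + 2 * l * v)) = E
      field_simp
      ring
    rw [e]
    exact h3
  · apply ContinuousOn.intervalIntegrable
    rw [uIcc_of_le hL]
    have hD : ∀ l ∈ Icc 0 L, 1 + 2 * l * (v : ℝ) ≠ 0 := fun l hl => by
      have := hl.1; positivity
    apply ContinuousOn.mul
    · apply ContinuousOn.inv₀ (by fun_prop)
      intro l hl; exact pow_ne_zero 2 (hD l hl)
    · apply Continuous.comp_continuousOn Real.continuous_exp
      exact ContinuousOn.div (by fun_prop) (by fun_prop) hD

/-- comparison from above -/
lemma inv_max_le {L y s : ℝ} (hL : 0 ≤ L) (hs : 0 < s) :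
    1 / max y s ≤ psi L y + Real.exp (-L * s) / s := by
  have hm : 0 < max y s := lt_of_lt_of_le hs (le_max_right _ _)
  have h1 : psi L (max y s) ≤ psi L y := psi_anti hL (le_max_left _ _)
  rw [psi_eq hm] at h1
  have h2 : Real.exp (-L * max y s) / max y s ≤ Real.exp (-L * s) / s := by
    have : Real.exp (-L * max y s) ≤ Real.exp (-L * s) := by
      apply Real.exp_le_exp.2
      nlinarith [le_max_right y s]
    exact div_le_div₀ (Real.exp_pos _).le this hs (le_max_right _ _)
  rw [sub_div] at h1
  linarith

/-- comparison from below -/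
lemma inv_max_ge {L y s m : ℝ} (hL : 0 ≤ L) (hs : 0 < s) (hy : 0 ≤ y) (hm : 0 ≤ m) :
    psi L y - L * Real.exp (m * s) * Real.exp (-m * y) ≤ 1 / max y s := by
  rcases le_or_gt s y with h | h
  · rw [max_eq_left h, psi_eq (hs.trans_le h), sub_div]
    have h1 : 0 ≤ Real.exp (-L * y) / y := div_nonneg (Real.exp_pos _).le hy
    have h2 : 0 ≤ L * Real.exp (m * s) * Real.exp (-m * y) := by positivity
    linarith
  · have h1 : psi L y ≤ L := by
      have := psi_anti hL hy
      rwa [psi_zero] at this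
    have h2 : 1 ≤ Real.exp (m * s) * Real.exp (-m * y) := by
      rw [← Real.exp_add]
      apply Real.one_le_exp
      nlinarith
    have h3 : 0 < 1 / max y s := by
      have hm : 0 < max y s := lt_of_lt_of_le hs (le_max_right _ _)
      positivity
    nlinarith

lemma one_step_upper {v : ℝ≥0} (hv : v ≠ 0) {q : ℝ} (hq : 0 < q) {x : Fin 4 → ℝ}
    (hx : q < sqn x) :
    ∫ z, 1 / max (sqn (x + z)) (q / 4) ∂(nu v) ≤ 1 / sqn x := by
  have hs : 0 < q / 4 := by linarith
  have hx0 : 0 < sqn x := hq.trans hx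
  have hlim : Tendsto (fun L : ℝ => 1 / sqn x + Real.exp (-L * (q/4)) / (q/4)) atTop
      (𝓝 (1 / sqn x + 0 / (q/4))) := by
    apply Tendsto.const_add
    apply Tendsto.div_const
    apply Real.tendsto_exp_atBot.comp
    simp_rw [neg_mul]
    exact tendsto_neg_atTop_atBot.comp (tendsto_id.atTop_mul_const hs)
  rw [zero_div, add_zero] at hlim
  refine ge_of_tendsto hlim ?_
  filter_upwards [eventually_ge_atTop 0] with L hL
  have hmeas : Measurable fun z : Fin 4 → ℝ => sqn (x + z) :=
    sqn_meas.comp (measurable_const_add x)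
  have hint : Integrable (fun z => psi L (sqn (x + z))) (nu v) := by
    apply integrable_bdd ((psi_cont L).measurable.comp hmeas) (C := L)
    intro z
    simp only [Function.comp]
    rw [abs_of_nonneg (psi_nonneg hL _)]
    have := psi_anti hL (sqn_nonneg (x + z))
    rwa [psi_zero] at this
  calc ∫ z, 1 / max (sqn (x + z)) (q / 4) ∂(nu v)
      ≤ ∫ z, (psi L (sqn (x + z)) + Real.exp (-L * (q/4)) / (q/4)) ∂(nu v) := by
        apply integral_mono_of_nonneg
        · exact ae_of_all _ fun z => by
            have hm : 0 < max (sqn (x+z)) (q/4) := lt_of_lt_of_le hs (le_max_right _ _)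
            simp only [Pi.zero_apply]; positivity
        · exact hint.add (integrable_const _)
        · exact ae_of_all _ fun z => inv_max_le hL hs
    _ = (1 - Real.exp (-L * sqn x / (1 + 2 * L * v))) / sqn x + Real.exp (-L * (q/4)) / (q/4) := by
        rw [integral_add hint (integrable_const _), psi_lap hv hL hx0]; simp
    _ ≤ _ := by
        gcongr
        linarith [Real.exp_pos (-L * sqn x / (1 + 2 * L * v))]

lemma one_step_lower {v : ℝ≥0} (hv : v ≠ 0) {q : ℝ} (hq : 0 < q) {x : Fin 4 → ℝ}
    (hx : q < sqn x) :
    q / sqn x - 3 * Real.exp (-(1 / (16 * v)) * sqn x)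
      ≤ q * ∫ z, 1 / max (sqn (x + z)) (q / 4) ∂(nu v) := by
  have hv0 : (0 : ℝ) < v := by
    have : 0 < v := pos_iff_ne_zero.2 hv
    exact_mod_cast this
  have hs : 0 < q / 4 := by linarith
  have hx0 : 0 < sqn x := hq.trans hx
  set L : ℝ := 1 / (2 * v) with hLdef
  have hL : 0 ≤ L := by positivity
  have hmeas : Measurable fun z : Fin 4 → ℝ => sqn (x + z) :=
    sqn_meas.comp (measurable_const_add x)
  have hint : Integrable (fun z => psi L (sqn (x + z))) (nu v) := by
    apply integrable_bdd ((psi_cont L).measurable.comp hmeas) (C := L)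
    intro z
    simp only [Function.comp]
    rw [abs_of_nonneg (psi_nonneg hL _)]
    have := psi_anti hL (sqn_nonneg (x + z))
    rwa [psi_zero] at this
  have hint2 : Integrable (fun z => Real.exp (-L * sqn (x + z))) (nu v) := by
    apply integrable_bdd (Real.measurable_exp.comp (hmeas.const_mul _)) (C := 1)
    intro z
    simp only [Function.comp]
    rw [abs_of_pos (Real.exp_pos _), Real.exp_le_one_iff]
    nlinarith [sqn_nonneg (x+z)]
  have hint3 : Integrable (fun z => 1 / max (sqn (x + z)) (q / 4)) (nu v) := by
    apply integrable_bdd (measurable_const.div (hmeas.max measurable_const)) (C := 1 / (q/4))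
    intro z
    have hm : 0 < max (sqn (x+z)) (q/4) := lt_of_lt_of_le hs (le_max_right _ _)
    simp only [Pi.div_apply]
    rw [abs_of_pos (one_div_pos.2 hm)]
    exact one_div_le_one_div_of_le hs (le_max_right _ _)
  have hD : 1 + 2 * L * v = 2 := by rw [hLdef]; field_simp; norm_num
  have key : (1 - Real.exp (-L * sqn x / 2)) / sqn x
      - L * Real.exp (L * (q/4)) * ((2 ^ 2 : ℝ)⁻¹ * Real.exp (-L * sqn x / 2))
      ≤ ∫ z, 1 / max (sqn (x + z)) (q / 4) ∂(nu v) := by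
    calc _ = ∫ z, (psi L (sqn (x + z)) - L * Real.exp (L * (q/4)) * Real.exp (-L * sqn (x+z))) ∂(nu v) := by
          rw [integral_sub hint (hint2.const_mul _), psi_lap hv hL hx0, integral_const_mul,
            gauss4 hv hL, hD]
      _ ≤ _ := by
          apply integral_mono (hint.sub (hint2.const_mul _)) hint3
          intro z
          exact inv_max_ge hL hs (sqn_nonneg _) hL
  set u := sqn x with hu
  set w := u / v with hw
  have hw0 : 0 < w := by positivity
  have e1 : -L * u / 2 = -(w/4) := by rw [hLdef, hw]; field_simp; norm_num
  have e2 : -(1 / (16 * (v:ℝ))) * u = -(w/16) := by rw [hw]; field_simp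
  rw [e1] at key
  rw [e2]
  have key2 := mul_le_mul_of_nonneg_left key hq.le
  refine le_trans ?_ key2
  -- bound errors
  have h1 : q * ((1 - Real.exp (-(w/4))) / u) ≥ q / u - Real.exp (-(w/16)) := by
    have a1 : Real.exp (-(w/4)) ≤ Real.exp (-(w/16)) := Real.exp_le_exp.2 (by linarith)
    have a2 : q / u ≤ 1 := by rw [div_le_one hx0]; exact hx.le
    have a3 : q * ((1 - Real.exp (-(w/4))) / u) = q / u - (q / u) * Real.exp (-(w/4)) := by ring
    have a4 : 0 ≤ q / u := by positivity
    have := mul_le_mul a2 a1 (Real.exp_pos _).le zero_le_one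
    linarith
  have h2 : q * (L * Real.exp (L * (q/4)) * ((2 ^ 2 : ℝ)⁻¹ * Real.exp (-(w/4))))
      ≤ 2 * Real.exp (-(w/16)) := by
    have a1 : L * (q / 4) ≤ w / 8 := by
      have : L * (q/4) ≤ L * (u/4) := by gcongr
      have e : L * (u/4) = w/8 := by rw [hLdef, hw]; field_simp; norm_num
      linarith
    have a2 : q * L ≤ w / 2 := by
      have : q * L ≤ u * L := by gcongr
      have e : u * L = w / 2 := by rw [hLdef, hw]; field_simp
      linarith
    have a3 : Real.exp (L * (q/4)) * Real.exp (-(w/4)) ≤ Real.exp (-(w/16)) * Real.exp (-(w/16)) := by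
      rw [← Real.exp_add, ← Real.exp_add]
      exact Real.exp_le_exp.2 (by linarith)
    have a4 : w / 16 * Real.exp (-(w/16)) ≤ 1 := by
      have := Real.add_one_le_exp (w/16)
      rw [Real.exp_neg, ← div_eq_mul_inv, div_le_one (Real.exp_pos _)]
      linarith
    calc _ = (q * L) * (2^2 : ℝ)⁻¹ * (Real.exp (L * (q/4)) * Real.exp (-(w/4))) := by ring
      _ ≤ (w / 2) * (2^2 : ℝ)⁻¹ * (Real.exp (-(w/16)) * Real.exp (-(w/16))) := by gcongr
      _ = 2 * (w / 16 * Real.exp (-(w/16))) * Real.exp (-(w/16)) := by ring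
      _ ≤ 2 * 1 * Real.exp (-(w/16)) := by gcongr
      _ = _ := by ring
  rw [mul_sub]
  linarith

/-- The one-step estimate. -/
lemma one_step {v : ℝ≥0} (hv : v ≠ 0) {k : ℝ} (hk : 1 < k) {x : Fin 4 → ℝ}
    (hx : k - 1 < sqn x) :
    |∫ z, Gf (sqn (x + z)) k ∂(nu v) - Gf (sqn x) k|
      ≤ 3 * Real.exp k * Real.exp (-(1 / (16 * v)) * sqn x) := by
  have hq : 0 < k - 1 := by linarith
  have h1 := one_step_upper hv hq hx
  have h2 := one_step_lower hv hq hx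
  have hs : 0 < (k - 1) / 4 := by linarith
  have hmeas : Measurable fun z : Fin 4 → ℝ => sqn (x + z) :=
    sqn_meas.comp (measurable_const_add x)
  have hint3 : Integrable (fun z => 1 / max (sqn (x + z)) ((k - 1) / 4)) (nu v) := by
    apply integrable_bdd (measurable_const.div (hmeas.max measurable_const)) (C := 1 / ((k - 1)/4))
    intro z
    have hm : 0 < max (sqn (x+z)) ((k - 1)/4) := lt_of_lt_of_le hs (le_max_right _ _)
    simp only [Pi.div_apply]
    rw [abs_of_pos (one_div_pos.2 hm)]
    exact one_div_le_one_div_of_le hs (le_max_right _ _)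
  have e : ∫ z, Gf (sqn (x + z)) k ∂(nu v) =
      Real.exp k * (1 - (k - 1) * ∫ z, 1 / max (sqn (x + z)) ((k - 1) / 4) ∂(nu v)) := by
    simp_rw [Gf, div_eq_mul_one_div (k - 1) (max _ _)]
    rw [integral_const_mul, integral_sub (integrable_const _) (hint3.const_mul _),
      integral_const_mul]
    simp
  rw [e, Gf_eq (by linarith), ← mul_sub, abs_mul, abs_of_pos (Real.exp_pos k)]
  have h3 := mul_le_mul_of_nonneg_left h1 hq.le
  have h4 : (k - 1) * (1 / sqn x) = (k - 1) / sqn x := by ring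
  rw [h4] at h3
  have := Real.exp_pos (-(1 / (16 * (v:ℝ))) * sqn x)
  have h5 : |1 - (k - 1) * ∫ z, 1 / max (sqn (x + z)) ((k - 1) / 4) ∂(nu v) -
      (1 - (k - 1) / sqn x)| ≤ 3 * Real.exp (-(1 / (16 * (v:ℝ))) * sqn x) := by
    rw [abs_le]; constructor <;> linarith
  calc _ ≤ Real.exp k * (3 * Real.exp (-(1 / (16 * (v:ℝ))) * sqn x)) := by gcongr
    _ = _ := by ring

end DD

namespace DD

open scoped Topology NNReal

variable {Ω : Type*} [MeasurableSpace Ω]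

/-- Rescaled grid walk. -/
noncomputable def Xg (γ : ℝ → Ω → EuclideanSpace ℝ (Fin 4)) (c : ℝ) (n j : ℕ) (ω : Ω) :
    Fin 4 → ℝ := fun i => γ ((j : ℝ) / n) ω i / √c

lemma law_inc {P : Measure Ω} [IsProbabilityMeasure P] {γ : ℝ → Ω → EuclideanSpace ℝ (Fin 4)}
    (hγ : IsStdBMVec 4 P γ) {c : ℝ} (hc : 0 < c) {s t : ℝ} (hs : 0 ≤ s) (hst : s ≤ t) :
    P.map (fun ω (i : Fin 4) => (γ t ω i - γ s ω i) / √c) = nu (Real.toNNReal ((t - s) / c)) := by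
  have hind : iIndepFun (fun (i : Fin 4) ω => (γ t ω i - γ s ω i) / √c) P :=
    hγ.indepCoord.comp (fun _ p => (p t - p s) / √c) (fun _ => by fun_prop)
  have hm : ∀ i : Fin 4, Measurable (fun ω => γ t ω i - γ s ω i) := fun i =>
    ((hγ.coord i).measurable t).sub ((hγ.coord i).measurable s)
  have hm2 : ∀ i : Fin 4, Measurable (fun ω => (γ t ω i - γ s ω i) / √c) := fun i =>
    (hm i).div_const _
  rw [(iIndepFun_iff_map_fun_eq_pi_map (fun i => (hm2 i).aemeasurable)).1 hind, nu]
  congr 1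
  ext1 i
  have : (fun ω => (γ t ω i - γ s ω i) / √c) = (· / √c) ∘ (fun ω => γ t ω i - γ s ω i) := rfl
  rw [this, ← Measure.map_map (by fun_prop) (hm i), (hγ.coord i).gauss s t hs hst,
    gaussianReal_map_div_const]
  congr 1
  · simp
  · ext
    have h1 : 0 ≤ t - s := by linarith
    have h2 : 0 ≤ (t - s) / c := by positivity
    simp [Real.coe_toNNReal _ h1, Real.coe_toNNReal _ h2, Real.sq_sqrt hc.le]

lemma Xg_meas {P : Measure Ω} {γ : ℝ → Ω → EuclideanSpace ℝ (Fin 4)}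
    (hγ : IsStdBMVec 4 P γ) (c : ℝ) (n j : ℕ) : Measurable (Xg γ c n j) :=
  measurable_pi_iff.2 fun i => ((hγ.coord i).measurable _).div_const _

lemma Xg_zero {P : Measure Ω} {γ : ℝ → Ω → EuclideanSpace ℝ (Fin 4)}
    (hγ : IsStdBMVec 4 P γ) (c : ℝ) (n : ℕ) (ω : Ω) : Xg γ c n 0 ω = 0 := by
  ext i
  have := (hγ.coord i).start ω
  simp [Xg, this]

lemma indep_past {P : Measure Ω} [IsProbabilityMeasure P] {γ : ℝ → Ω → EuclideanSpace ℝ (Fin 4)}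
    (hγ : IsStdBMVec 4 P γ) (c : ℝ) (n j : ℕ) :
    IndepFun (fun ω (i : ℕ) => Xg γ c n (min i j) ω)
      (fun ω => Xg γ c n (j + 1) ω - Xg γ c n j ω) P := by
  classical
  set η : Fin 4 → Fin (j + 1) → Ω → ℝ :=
    fun i l ω => γ (((l : ℕ) + 1 : ℕ) / n) ω i - γ (((l : ℕ) : ℝ) / n) ω i with hη
  have mη : ∀ i l, Measurable (η i l) := fun i l =>
    ((hγ.coord i).measurable _).sub ((hγ.coord i).measurable _)
  have h1 : iIndepFun (fun i ω ↦ (η i · ω)) P :=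
    hγ.indepCoord.comp (fun _ p => fun l : Fin (j+1) => p (((l : ℕ) + 1 : ℕ) / n) - p (((l : ℕ) : ℝ) / n))
      (fun _ => by fun_prop)
  have h2 : ∀ i, iIndepFun (η i) P := by
    intro i
    have := (hγ.coord i).indep (j + 1) (fun l => ((l : ℕ) : ℝ) / n) (fun l => by positivity)
      (fun a b hab => by
        have : (a : ℕ) ≤ (b : ℕ) := hab
        have h' : ((a : ℕ) : ℝ) ≤ ((b : ℕ) : ℝ) := by exact_mod_cast this
        exact div_le_div_of_nonneg_right h' (Nat.cast_nonneg _))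
    exact this
  have h3 := iIndepFun_uncurry' mη h1 h2
  set S : Finset (Fin 4 × Fin (j + 1)) := Finset.univ.filter fun p => (p.2 : ℕ) < j with hS
  set T : Finset (Fin 4 × Fin (j + 1)) := Finset.univ.filter fun p => (p.2 : ℕ) = j with hT
  have hST : Disjoint S T := by
    rw [Finset.disjoint_left]
    intro p hp hq
    simp only [hS, hT, Finset.mem_filter] at hp hq
    omega
  have h4 := h3.indepFun_finset S T hST (fun p => mη p.1 p.2)
  let φ : (S → ℝ) → ℕ → Fin 4 → ℝ := fun y i k =>
    (∑ l ∈ Finset.range (min i j), if h : ∃ hl : l < j + 1, (k, (⟨l, hl⟩ : Fin (j+1))) ∈ S then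
      y ⟨(k, ⟨l, h.1⟩), h.2⟩ else 0) / √c
  let ψ : (T → ℝ) → Fin 4 → ℝ := fun y k =>
    y ⟨(k, ⟨j, Nat.lt_succ_self j⟩), by simp [hT]⟩ / √c
  have hφ : Measurable φ := by
    refine measurable_pi_iff.2 fun i => measurable_pi_iff.2 fun k => ?_
    refine Measurable.div_const (Finset.measurable_sum _ fun l _ => ?_) _
    by_cases h : ∃ hl : l < j + 1, (k, (⟨l, hl⟩ : Fin (j+1))) ∈ S
    · simp only [h, dite_true]
      exact measurable_pi_apply _
    · simp only [h, dite_false]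
      exact measurable_const
  have hψ : Measurable ψ := by
    refine measurable_pi_iff.2 fun k => Measurable.div_const (measurable_pi_apply _) _
  have h5 := h4.comp hφ hψ
  have e1 : φ ∘ (fun a (p : S) => η p.1.1 p.1.2 a) = fun ω (i : ℕ) => Xg γ c n (min i j) ω := by
    funext ω i k
    simp only [Function.comp, φ, Xg]
    congr 1
    have : ∀ l ∈ Finset.range (min i j),
        (if h : ∃ hl : l < j + 1, (k, (⟨l, hl⟩ : Fin (j+1))) ∈ S then
          η k ⟨l, h.1⟩ ω else 0) = γ ((l + 1 : ℕ) / n) ω k - γ ((l : ℝ) / n) ω k := by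
      intro l hl
      have hl' : l < j := by have := Finset.mem_range.1 hl; omega
      have h : ∃ hl : l < j + 1, (k, (⟨l, hl⟩ : Fin (j+1))) ∈ S :=
        ⟨by omega, by simp [hS, hl']⟩
      rw [dif_pos h]
    rw [Finset.sum_congr rfl this, Finset.sum_range_sub (fun l : ℕ => γ ((l : ℝ) / n) ω k)]
    have := (hγ.coord k).start ω
    simp [this]
  have e2 : ψ ∘ (fun a (p : T) => η p.1.1 p.1.2 a) = fun ω => Xg γ c n (j + 1) ω - Xg γ c n j ω := by
    funext ω k
    simp only [Function.comp, ψ, Xg, hη, Pi.sub_apply]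
    ring
  rw [e1, e2] at h5
  exact h5

end DD

namespace DD

open scoped Topology NNReal

lemma Kseq_meas {α : Type*} [MeasurableSpace α] (b : ℝ) {u : α → ℕ → ℝ}
    (hu : ∀ i, Measurable fun a => u a i) (j : ℕ) : Measurable fun a => Kseq b (u a) j := by
  induction j with
  | zero => exact measurable_const
  | succ j ih => exact measurable_const.min (ih.max (hu (j+1)))

lemma alive_meas {α : Type*} [MeasurableSpace α] (b : ℝ) {u : α → ℕ → ℝ}
    (hu : ∀ i, Measurable fun a => u a i) (j : ℕ) : MeasurableSet {a | alive b (u a) j} := by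
  unfold alive
  simp only [setOf_forall]
  refine MeasurableSet.iInter fun i => MeasurableSet.iInter fun _ => ?_
  have hK := Kseq_meas b hu i
  refine MeasurableSet.inter (measurableSet_lt hK measurable_const) (MeasurableSet.union ?_ ?_)
  · exact measurableSet_eq_fun hK measurable_const
  · exact measurableSet_lt (hK.sub_const 1) (hu i)

lemma Gf_meas {α : Type*} [MeasurableSpace α] {x k : α → ℝ} (hx : Measurable x)
    (hk : Measurable k) : Measurable fun a => Gf (x a) (k a) := by
  unfold Gf
  fun_prop

lemma Zseq_meas {α : Type*} [MeasurableSpace α] (b : ℝ) {u : α → ℕ → ℝ}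
    (hu : ∀ i, Measurable fun a => u a i) (N : ℕ) : Measurable fun a => Zseq b (u a) N := by
  classical
  unfold Zseq
  refine measurable_const.add (Finset.measurable_sum _ fun j _ => ?_)
  exact Measurable.ite (alive_meas b hu j)
    ((Gf_meas (hu _) (Kseq_meas b hu _)).sub (Gf_meas (hu _) (Kseq_meas b hu _))) measurable_const

lemma Rseq_meas {α : Type*} [MeasurableSpace α] (b : ℝ) {u : α → ℕ → ℝ}
    (hu : ∀ i, Measurable fun a => u a i) (N : ℕ) : Measurable fun a => Rseq b (u a) N := by
  classical
  unfold Rseq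
  refine Finset.measurable_sum _ fun j _ => ?_
  exact Measurable.ite (alive_meas b hu j)
    ((Gf_meas (hu _) (Kseq_meas b hu _)).sub (Gf_meas (hu _) (Kseq_meas b hu _))) measurable_const

open Classical in
/-- First-order terms. -/
noncomputable def Dterm (b : ℝ) (u : ℕ → ℝ) (j : ℕ) : ℝ :=
  if alive b u j then Gf (u (j + 1)) (Kseq b u j) - Gf (u j) (Kseq b u j) else 0

lemma Dterm_meas {α : Type*} [MeasurableSpace α] (b : ℝ) {u : α → ℕ → ℝ}
    (hu : ∀ i, Measurable fun a => u a i) (j : ℕ) : Measurable fun a => Dterm b (u a) j := by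
  classical
  unfold Dterm
  exact Measurable.ite (alive_meas b hu j)
    ((Gf_meas (hu _) (Kseq_meas b hu _)).sub (Gf_meas (hu _) (Kseq_meas b hu _))) measurable_const

lemma Dterm_abs_le {b : ℝ} (hb : 1 ≤ b) (u : ℕ → ℝ) (j : ℕ) :
    |Dterm b u j| ≤ 6 * Real.exp b := by
  unfold Dterm
  have h1 := Gf_abs_le (x := u (j+1)) (Kseq_one_le hb u j) (Kseq_le hb u j)
  have h2 := Gf_abs_le (x := u j) (Kseq_one_le hb u j) (Kseq_le hb u j)
  rw [abs_le] at h1 h2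
  split_ifs
  · rw [abs_le]; constructor <;> linarith [h1.1, h1.2, h2.1, h2.2]
  · rw [abs_zero]; positivity

lemma Zseq_decomp (b : ℝ) (u : ℕ → ℝ) (N : ℕ) :
    Zseq b u N = Real.exp 1 + ∑ j ∈ Finset.range N, Dterm b u j + Rseq b u N := by
  classical
  unfold Zseq Rseq Dterm
  rw [add_assoc, ← Finset.sum_add_distrib]
  congr 1
  refine Finset.sum_congr rfl fun j _ => ?_
  split_ifs <;> ring

open Classical in
/-- The one-step functional of the past and the increment. -/
noncomputable def Hfun (b : ℝ) (j : ℕ) (q : (ℕ → Fin 4 → ℝ) × (Fin 4 → ℝ)) : ℝ :=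
  if alive b (fun i => sqn (q.1 i)) j then
    Gf (sqn (q.1 j + q.2)) (Kseq b (fun i => sqn (q.1 i)) j) -
      Gf (sqn (q.1 j)) (Kseq b (fun i => sqn (q.1 i)) j) else 0

lemma Hfun_meas (b : ℝ) (j : ℕ) : Measurable (Hfun b j) := by
  classical
  have hu : ∀ i, Measurable fun q : (ℕ → Fin 4 → ℝ) × (Fin 4 → ℝ) => sqn (q.1 i) := fun i =>
    sqn_meas.comp ((measurable_pi_apply i).comp measurable_fst)
  have hK := Kseq_meas b hu j
  unfold Hfun
  refine Measurable.ite (alive_meas b hu j) ((Gf_meas ?_ hK).sub (Gf_meas (hu j) hK))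
    measurable_const
  exact sqn_meas.comp (((measurable_pi_apply j).comp measurable_fst).add measurable_snd)

lemma Hfun_abs_le {b : ℝ} (hb : 1 ≤ b) (j : ℕ) (q) : |Hfun b j q| ≤ 6 * Real.exp b := by
  unfold Hfun
  set u : ℕ → ℝ := fun i => sqn (q.1 i)
  have h1 := Gf_abs_le (x := sqn (q.1 j + q.2)) (Kseq_one_le hb u j) (Kseq_le hb u j)
  have h2 := Gf_abs_le (x := sqn (q.1 j)) (Kseq_one_le hb u j) (Kseq_le hb u j)
  rw [abs_le] at h1 h2
  split_ifs
  · rw [abs_le]; constructor <;> linarith [h1.1, h1.2, h2.1, h2.2]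
  · rw [abs_zero]; positivity

/-- Error weight. -/
noncomputable def Efun (b : ℝ) (v : ℝ) (j : ℕ) (u : ℕ → ℝ) : ℝ :=
  if 1 < Kseq b u j then 3 * Real.exp b * Real.exp (-(1 / (16 * v)) * u j) else 0

lemma Efun_meas {α : Type*} [MeasurableSpace α] (b v : ℝ) {u : α → ℕ → ℝ}
    (hu : ∀ i, Measurable fun a => u a i) (j : ℕ) : Measurable fun a => Efun b v j (u a) := by
  unfold Efun
  refine Measurable.ite (measurableSet_lt measurable_const (Kseq_meas b hu j)) ?_ measurable_const
  exact ((Real.measurable_exp.comp ((hu j).const_mul _))).const_mul _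

lemma Efun_nonneg (b v : ℝ) (j : ℕ) (u : ℕ → ℝ) : 0 ≤ Efun b v j u := by
  unfold Efun; split_ifs <;> positivity

lemma Efun_le {b v : ℝ} (hv : 0 ≤ v) {j : ℕ} {u : ℕ → ℝ} (hu : 0 ≤ u j) :
    Efun b v j u ≤ 3 * Real.exp b := by
  unfold Efun; split_ifs
  · have : Real.exp (-(1 / (16 * v)) * u j) ≤ 1 := by
      rw [Real.exp_le_one_iff]
      have : 0 ≤ 1 / (16 * v) := by positivity
      nlinarith
    have h2 := Real.exp_pos b
    nlinarith
  · positivity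

lemma Efun_le' {b v : ℝ} {j : ℕ} {u : ℕ → ℝ} :
    Efun b v j u ≤ 3 * Real.exp b * Real.exp (-(1 / (16 * v)) * u j) := by
  unfold Efun; split_ifs
  · exact le_rfl
  · positivity

lemma Hfun_inner {b : ℝ} (hb : 1 ≤ b) {v : ℝ≥0} (hv : v ≠ 0) (j : ℕ) (p : ℕ → Fin 4 → ℝ) :
    |∫ z, Hfun b j (p, z) ∂(nu v)| ≤ Efun b v j (fun i => sqn (p i)) := by
  classical
  set u : ℕ → ℝ := fun i => sqn (p i) with hu
  by_cases ha : alive b u j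
  · have e : ∀ z, Hfun b j (p, z) = Gf (sqn (p j + z)) (Kseq b u j) - Gf (sqn (p j)) (Kseq b u j) := by
      intro z
      simp only [Hfun]
      rw [if_pos ha]
    simp_rw [e]
    have hK1 := Kseq_one_le hb u j
    have hKb := Kseq_le hb u j
    rcases (ha j le_rfl).2 with h1 | h1
    · rw [h1]
      simp only [Gf_one, sub_self, integral_zero, abs_zero]
      exact Efun_nonneg _ _ _ _
    · rcases hK1.eq_or_lt with h2 | h2
      · rw [← h2]
        simp only [Gf_one, sub_self, integral_zero, abs_zero]
        exact Efun_nonneg _ _ _ _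
      · have hint : Integrable (fun z => Gf (sqn (p j + z)) (Kseq b u j)) (nu v) :=
          integrable_bdd (Gf_meas (sqn_meas.comp (measurable_const_add _)) measurable_const)
            (fun z => Gf_abs_le hK1 hKb)
        rw [integral_sub hint (integrable_const _)]
        simp only [integral_const, probReal_univ, one_smul]
        refine (one_step hv h2 h1).trans ?_
        unfold Efun
        rw [if_pos h2]
        have : Real.exp (Kseq b u j) ≤ Real.exp b := Real.exp_le_exp.2 hKb
        gcongr
  · have e : ∀ z, Hfun b j (p, z) = 0 := by
      intro z
      simp only [Hfun]
      rw [if_neg ha]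
    simp_rw [e]
    simp only [integral_zero, abs_zero]
    exact Efun_nonneg _ _ _ _

variable {Ω : Type*} [MeasurableSpace Ω]

/-- grid values of the squared Bessel process -/
noncomputable def ug (γ : ℝ → Ω → EuclideanSpace ℝ (Fin 4)) (c : ℝ) (n : ℕ) (ω : Ω) (j : ℕ) : ℝ :=
  sqn (Xg γ c n j ω)

lemma ug_meas {P : Measure Ω} {γ : ℝ → Ω → EuclideanSpace ℝ (Fin 4)}
    (hγ : IsStdBMVec 4 P γ) (c : ℝ) (n j : ℕ) : Measurable fun ω => ug γ c n ω j :=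
  sqn_meas.comp (Xg_meas hγ c n j)

lemma ug_eq (γ : ℝ → Ω → EuclideanSpace ℝ (Fin 4)) {c : ℝ} (hc : 0 ≤ c) (n : ℕ) (ω : Ω) :
    ug γ c n ω = smp (fun t => sqBessel4 γ t ω / c) n := by
  funext j
  simp only [ug, sqn, Xg, smp, sqBessel4, EuclideanSpace.norm_sq_eq, div_pow, Real.sq_sqrt hc,
    Real.norm_eq_abs, sq_abs, Finset.sum_div]

lemma step_bound {P : Measure Ω} [IsProbabilityMeasure P] {γ : ℝ → Ω → EuclideanSpace ℝ (Fin 4)}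
    (hγ : IsStdBMVec 4 P γ) {c : ℝ} (hc : 0 < c) {n : ℕ} (hn : 0 < n) (j : ℕ) {b : ℝ} (hb : 1 ≤ b) :
    |∫ ω, Dterm b (ug γ c n ω) j ∂P| ≤ ∫ ω, Efun b (1 / (n * c)) j (ug γ c n ω) ∂P := by
  classical
  set v : ℝ≥0 := Real.toNNReal (1 / (n * c)) with hvdef
  have hpos : (0:ℝ) < 1 / (n * c) := by positivity
  have hvr : (v : ℝ) = 1 / (n * c) := Real.coe_toNNReal _ hpos.le
  have hv : v ≠ 0 := (Real.toNNReal_pos.2 hpos).ne'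
  let past : Ω → ℕ → Fin 4 → ℝ := fun ω i => Xg γ c n (min i j) ω
  let inc : Ω → Fin 4 → ℝ := fun ω => Xg γ c n (j + 1) ω - Xg γ c n j ω
  have mpast : Measurable past := measurable_pi_iff.2 fun i => Xg_meas hγ c n _
  have minc : Measurable inc := (Xg_meas hγ c n _).sub (Xg_meas hγ c n _)
  have hlaw : P.map inc = nu v := by
    have := law_inc hγ hc (s := (j:ℝ)/n) (t := ((j+1 : ℕ) : ℝ)/n) (by positivity) (by
      gcongr; simp)
    have e : inc = (fun ω (i : Fin 4) => (γ (((j+1 : ℕ) : ℝ)/n) ω i - γ ((j:ℝ)/n) ω i) / √c) := by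
      funext ω i
      simp only [inc, Xg, Pi.sub_apply]; ring
    rw [e, this, hvdef]
    congr 2
    push_cast
    field_simp
    ring
  have hpair : P.map (fun ω => (past ω, inc ω)) = (P.map past).prod (nu v) := by
    rw [← hlaw]
    exact (indepFun_iff_map_prod_eq_prod_map_map mpast.aemeasurable minc.aemeasurable).1
      (indep_past hγ c n j)
  have hagree : ∀ ω, ∀ i ≤ j, ug γ c n ω i = (fun i => sqn (past ω i)) i := by
    intro ω i hi
    simp only [ug, past, min_eq_left hi]
  have eD : ∀ ω, Dterm b (ug γ c n ω) j = Hfun b j (past ω, inc ω) := by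
    intro ω
    simp only [Dterm, Hfun]
    rw [← Kseq_congr b (hagree ω), if_congr (alive_congr b (hagree ω)) rfl rfl]
    have e1 : past ω j + inc ω = Xg γ c n (j+1) ω := by simp [past, inc]
    have e2 : past ω j = Xg γ c n j ω := by simp [past]
    rw [e1, e2]; rfl
  have eE : ∀ ω, Efun b (1 / (n * c)) j (ug γ c n ω) = Efun b v j (fun i => sqn (past ω i)) := by
    intro ω
    simp only [Efun, hvr]
    rw [← Kseq_congr b (hagree ω), hagree ω j le_rfl]
  have : IsProbabilityMeasure (P.map past) := Measure.isProbabilityMeasure_map mpast.aemeasurable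
  have hHint : Integrable (Hfun b j) ((P.map past).prod (nu v)) :=
    integrable_bdd (Hfun_meas b j) (Hfun_abs_le hb j)
  have hum : ∀ i, Measurable fun p : ℕ → Fin 4 → ℝ => sqn (p i) := fun i =>
    sqn_meas.comp (measurable_pi_apply i)
  have hEm := Efun_meas b v hum j
  have hEint : Integrable (fun p : ℕ → Fin 4 → ℝ => Efun b v j (fun i => sqn (p i))) (P.map past) :=
    integrable_bdd hEm (C := 3 * Real.exp b) (fun p => by
      rw [abs_of_nonneg (Efun_nonneg _ _ _ _)]
      exact Efun_le v.2 (sqn_nonneg _))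
  calc |∫ ω, Dterm b (ug γ c n ω) j ∂P| = |∫ q, Hfun b j q ∂((P.map past).prod (nu v))| := by
        rw [← hpair, integral_map (mpast.prodMk minc).aemeasurable
          (Hfun_meas b j).aestronglyMeasurable]
        simp_rw [eD]
    _ = |∫ p, ∫ z, Hfun b j (p, z) ∂(nu v) ∂(P.map past)| := by rw [integral_prod _ hHint]
    _ ≤ ∫ p, |∫ z, Hfun b j (p, z) ∂(nu v)| ∂(P.map past) := abs_integral_le_integral_abs
    _ ≤ ∫ p, Efun b v j (fun i => sqn (p i)) ∂(P.map past) :=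
        integral_mono_of_nonneg (ae_of_all _ fun _ => abs_nonneg _) hEint
          (ae_of_all _ fun p => Hfun_inner hb hv j p)
    _ = _ := by
        rw [integral_map mpast.aemeasurable hEm.aestronglyMeasurable]
        simp_rw [eE]

end DD

namespace DD

open scoped Topology NNReal

variable {Ω : Type*} [MeasurableSpace Ω]

lemma U_cont {P : Measure Ω} {γ : ℝ → Ω → EuclideanSpace ℝ (Fin 4)}
    (hγ : IsStdBMVec 4 P γ) (ω : Ω) : Continuous fun t => sqBessel4 γ t ω := by
  simp only [sqBessel4, EuclideanSpace.norm_sq_eq, Real.norm_eq_abs, sq_abs]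
  exact continuous_finsetSum _ fun i _ => ((hγ.coord i).cont ω).pow 2

lemma U_zero {P : Measure Ω} {γ : ℝ → Ω → EuclideanSpace ℝ (Fin 4)}
    (hγ : IsStdBMVec 4 P γ) (ω : Ω) : sqBessel4 γ 0 ω = 0 := by
  simp only [sqBessel4, EuclideanSpace.norm_sq_eq, Real.norm_eq_abs, sq_abs]
  exact Finset.sum_eq_zero fun i _ => by rw [(hγ.coord i).start ω]; simp

lemma U_meas {P : Measure Ω} {γ : ℝ → Ω → EuclideanSpace ℝ (Fin 4)}
    (hγ : IsStdBMVec 4 P γ) (t : ℝ) : Measurable fun ω => sqBessel4 γ t ω := by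
  simp only [sqBessel4, EuclideanSpace.norm_sq_eq, Real.norm_eq_abs, sq_abs]
  exact Finset.measurable_sum _ fun i _ => ((hγ.coord i).measurable t).pow_const 2

/-- Laplace transform of the squared Bessel process. -/
lemma U_laplace {P : Measure Ω} [IsProbabilityMeasure P] {γ : ℝ → Ω → EuclideanSpace ℝ (Fin 4)}
    (hγ : IsStdBMVec 4 P γ) {l t : ℝ} (hl : 0 ≤ l) (ht : 0 ≤ t) :
    ∫ ω, Real.exp (-l * sqBessel4 γ t ω) ∂P = ((1 + 2 * l * t) ^ 2)⁻¹ := by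
  rcases ht.eq_or_lt with rfl | ht0
  · simp [U_zero hγ]
  · have hlaw := law_inc hγ one_pos le_rfl ht
    have hm : Measurable (fun ω (i : Fin 4) => (γ t ω i - γ 0 ω i) / √1) :=
      measurable_pi_iff.2 fun i =>
        (((hγ.coord i).measurable t).sub ((hγ.coord i).measurable 0)).div_const _
    have hg : Measurable fun z : Fin 4 → ℝ => Real.exp (-l * sqn (0 + z)) :=
      Real.measurable_exp.comp ((sqn_meas.comp (measurable_const_add _)).const_mul _)
    have hv : Real.toNNReal ((t - 0) / 1) ≠ 0 := (Real.toNNReal_pos.2 (by simpa using ht0)).ne'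
    have h4 := gauss4 hv hl 0
    rw [← hlaw, integral_map hm.aemeasurable hg.aestronglyMeasurable] at h4
    have e : ∀ ω, sqn (0 + fun i : Fin 4 => (γ t ω i - γ 0 ω i) / √1) = sqBessel4 γ t ω := by
      intro ω
      simp only [sqn, sqBessel4, EuclideanSpace.norm_sq_eq, Real.norm_eq_abs, sq_abs]
      refine Finset.sum_congr rfl fun i _ => ?_
      have h0 := (hγ.coord i).start ω
      simp [h0]
    simp_rw [e] at h4
    rw [h4]
    have : sqn 0 = 0 := by simp [sqn]
    rw [this, sub_zero, div_one, Real.coe_toNNReal _ ht]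
    simp

/-- The process is unbounded. -/
lemma U_unbdd {P : Measure Ω} [IsProbabilityMeasure P] {γ : ℝ → Ω → EuclideanSpace ℝ (Fin 4)}
    (hγ : IsStdBMVec 4 P γ) : ∀ᵐ ω ∂P, ∀ M : ℝ, ∃ T, 0 ≤ T ∧ M < sqBessel4 γ T ω := by
  have key : ∀ M : ℕ, ∀ᵐ ω ∂P, ∃ n : ℕ, (M : ℝ) < sqBessel4 γ n ω := by
    intro M
    rw [ae_iff]
    set E : Set Ω := {ω | ¬ ∃ n : ℕ, (M : ℝ) < sqBessel4 γ n ω} with hE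
    have mE : MeasurableSet E := by
      have : E = ⋂ n : ℕ, {ω | sqBessel4 γ n ω ≤ M} := by
        ext ω; simp [hE]
      rw [this]
      exact MeasurableSet.iInter fun n => measurableSet_le (U_meas hγ _) measurable_const
    have h1 : ∀ n : ℕ, Real.exp (-M) * P.real E ≤ ((1 + 2 * 1 * (n : ℝ)) ^ 2)⁻¹ := by
      intro n
      rw [← U_laplace hγ zero_le_one (Nat.cast_nonneg n)]
      have e : Real.exp (-M) * P.real E = ∫ ω, E.indicator (fun _ => Real.exp (-M)) ω ∂P := by
        rw [integral_indicator_const _ mE, smul_eq_mul, mul_comm]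
      rw [e]
      apply integral_mono_of_nonneg
      · exact ae_of_all _ fun ω => indicator_nonneg (fun _ _ => (Real.exp_pos _).le) _
      · refine integrable_bdd (Real.measurable_exp.comp ((U_meas hγ n).const_mul _)) (C := 1) ?_
        intro ω
        rw [abs_of_pos (Real.exp_pos _), Real.exp_le_one_iff]
        have : 0 ≤ sqBessel4 γ n ω := sq_nonneg _
        linarith
      · refine ae_of_all _ fun ω => ?_
        by_cases h : ω ∈ E
        · simp only [indicator_of_mem h]
          apply Real.exp_le_exp.2
          simp only [hE, mem_setOf_eq, not_exists, not_lt] at h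
          linarith [h n]
        · simp only [indicator_of_notMem h]
          exact (Real.exp_pos _).le
    have h2 : Tendsto (fun n : ℕ => ((1 + 2 * 1 * (n : ℝ)) ^ 2)⁻¹) atTop (𝓝 0) := by
      apply Tendsto.inv_tendsto_atTop
      apply (tendsto_pow_atTop two_ne_zero).comp
      apply tendsto_atTop_add_const_left
      exact tendsto_natCast_atTop_atTop.const_mul_atTop (by norm_num)
    have h3 : Real.exp (-M) * P.real E ≤ 0 := ge_of_tendsto' h2 h1
    have h4 : P.real E = 0 := by
      have := Real.exp_pos (-(M:ℝ))
      have h5 : 0 ≤ P.real E := measureReal_nonneg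
      nlinarith
    exact (measureReal_eq_zero_iff).1 h4
  filter_upwards [ae_all_iff.2 key] with ω hω M
  obtain ⟨m, hm⟩ := exists_nat_gt M
  obtain ⟨n, hn⟩ := hω m
  exact ⟨n, Nat.cast_nonneg n, hm.trans hn⟩

/-- The approximate martingale property. -/
lemma EZ_tendsto {P : Measure Ω} [IsProbabilityMeasure P] {γ : ℝ → Ω → EuclideanSpace ℝ (Fin 4)}
    (hγ : IsStdBMVec 4 P γ) {b : ℝ} (hb : 1 < b) {c : ℝ} (hc : 0 < c) :
    Tendsto (fun n : ℕ => ∫ ω, Zseq b (smp (fun t => sqBessel4 γ t ω / c) n) (n ^ 2) ∂P) atTop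
      (𝓝 (Real.exp 1)) := by
  simp_rw [← ug_eq γ hc.le]
  have hD : ∀ n j, Integrable (fun ω => Dterm b (ug γ c n ω) j) P := fun n j =>
    integrable_bdd (Dterm_meas b (ug_meas hγ c n) j) (fun ω => Dterm_abs_le hb.le _ _)
  have hu0 : ∀ n ω, ug γ c n ω 0 = 0 := fun n ω => by
    simp [ug, Xg_zero hγ, sqn]
  have hRb : ∀ n ω N, |Rseq b (ug γ c n ω) N| ≤ Real.exp b * b * 1 := fun n ω N => by
    obtain ⟨h1, h2⟩ := R_bound hb.le (hu0 n ω) N zero_le_one (fun j _ => min_le_left _ _)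
    rw [abs_of_nonneg h1]; exact h2
  have hR : ∀ n N, Integrable (fun ω => Rseq b (ug γ c n ω) N) P := fun n N =>
    integrable_bdd (Rseq_meas b (ug_meas hγ c n) N) (fun ω => hRb n ω N)
  have e : ∀ n : ℕ, ∫ ω, Zseq b (ug γ c n ω) (n ^ 2) ∂P = Real.exp 1 +
      ∑ j ∈ Finset.range (n ^ 2), ∫ ω, Dterm b (ug γ c n ω) j ∂P
        + ∫ ω, Rseq b (ug γ c n ω) (n ^ 2) ∂P := by
    intro n
    simp_rw [Zseq_decomp]
    have hS : Integrable (fun ω => ∑ j ∈ Finset.range (n ^ 2), Dterm b (ug γ c n ω) j) P :=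
      integrable_finsetSum _ fun j _ => hD n j
    have hS2 : Integrable (fun ω => Real.exp 1 + ∑ j ∈ Finset.range (n ^ 2),
        Dterm b (ug γ c n ω) j) P := (integrable_const _).add hS
    rw [integral_add hS2 (hR _ _), integral_add (integrable_const _) hS,
      integral_finsetSum _ fun j _ => hD n j]
    simp
  simp_rw [e]
  -- the remainder
  have hRlim : Tendsto (fun n : ℕ => ∫ ω, Rseq b (ug γ c n ω) (n ^ 2) ∂P) atTop (𝓝 0) := by
    have : (0:ℝ) = ∫ _ω : Ω, (0:ℝ) ∂P := by simp
    rw [this]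
    apply tendsto_integral_of_dominated_convergence (fun _ => Real.exp b * b * 1)
    · exact fun n => (hR n _).aestronglyMeasurable
    · exact integrable_const _
    · exact fun n => ae_of_all _ fun ω => hRb n ω _
    · filter_upwards [U_unbdd hγ] with ω hω
      obtain ⟨T, hT, hTb⟩ := hω (b * c)
      simp_rw [ug_eq γ hc.le]
      refine path_R ((U_cont hγ ω).div_const c) (by simp [U_zero hγ]) hb hT ?_
      rwa [lt_div_iff₀ hc]
  -- the sum
  have hbound : ∀ n j : ℕ, 0 < n → |∫ ω, Dterm b (ug γ c n ω) j ∂P| ≤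
      3 * Real.exp b * ((1 + (j:ℝ) / 8) ^ 2)⁻¹ := by
    intro n j hn
    refine (step_bound hγ hc hn j hb.le).trans ?_
    have hn' : (0:ℝ) < n := by exact_mod_cast hn
    have h1 := U_laplace hγ (l := n / 16) (t := (j:ℝ) / n) (by positivity) (by positivity)
    have e1 : 2 * ((n:ℝ) / 16) * (j / n) = j / 8 := by field_simp; ring
    rw [e1] at h1
    rw [← h1, ← integral_const_mul]
    apply integral_mono_of_nonneg (ae_of_all _ fun ω => Efun_nonneg _ _ _ _)
    · refine Integrable.const_mul (integrable_bdd (Real.measurable_exp.comp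
        ((U_meas hγ _).const_mul _)) (C := 1) ?_) _
      intro ω
      simp only [Function.comp]
      rw [abs_of_pos (Real.exp_pos _), Real.exp_le_one_iff]
      have h2 : 0 ≤ sqBessel4 γ ((j:ℝ)/n) ω := sq_nonneg _
      have : 0 ≤ (n:ℝ) / 16 * sqBessel4 γ ((j:ℝ)/n) ω := by positivity
      linarith
    · refine ae_of_all _ fun ω => Efun_le'.trans (le_of_eq ?_)
      rw [ug_eq γ hc.le]
      simp only [smp]
      congr 2
      field_simp
  have hterm : ∀ j : ℕ, Tendsto (fun n : ℕ => ∫ ω, Dterm b (ug γ c n ω) j ∂P) atTop (𝓝 0) := by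
    intro j
    have hE : Tendsto (fun n : ℕ => ∫ ω, Efun b (1 / (n * c)) j (ug γ c n ω) ∂P) atTop (𝓝 0) := by
      have : (0:ℝ) = ∫ _ω : Ω, (0:ℝ) ∂P := by simp
      rw [this]
      apply tendsto_integral_of_dominated_convergence (fun _ => 3 * Real.exp b)
      · exact fun n => (Efun_meas b _ (ug_meas hγ c n) j).aestronglyMeasurable
      · exact integrable_const _
      · refine fun n => ae_of_all _ fun ω => ?_
        rw [Real.norm_eq_abs, abs_of_nonneg (Efun_nonneg _ _ _ _)]
        exact Efun_le (by positivity) (sqn_nonneg _)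
      · refine ae_of_all _ fun ω => ?_
        refine tendsto_const_nhds.congr' ?_
        have h1 : ∀ i : ℕ, ∀ᶠ n : ℕ in atTop, ug γ c n ω i ≤ 1 := by
          intro i
          have h2 : Tendsto (fun n : ℕ => ug γ c n ω i) atTop (𝓝 (sqBessel4 γ 0 ω / c)) := by
            simp_rw [ug_eq γ hc.le]
            exact ((U_cont hγ ω).div_const c).continuousAt.tendsto.comp
              (tendsto_const_div_atTop_nhds_zero_nat (i:ℝ))
          rw [U_zero hγ, zero_div] at h2
          exact (h2.eventually_lt_const one_pos).mono fun n hn => hn.le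
        have h3 : ∀ᶠ n : ℕ in atTop, ∀ i ∈ Finset.range (j+1), ug γ c n ω i ≤ 1 :=
          (Finset.eventually_all _).2 fun i _ => h1 i
        filter_upwards [h3] with n hn
        have h4 : Kseq b (ug γ c n ω) j ≤ 1 := Kseq_le_of le_rfl fun i hi =>
          hn i (Finset.mem_range.2 (by omega))
        simp only [Efun]
        rw [if_neg (not_lt.2 h4)]
    apply squeeze_zero_norm' _ hE
    filter_upwards [eventually_gt_atTop 0] with n hn
    exact step_bound hγ hc hn j hb.le
  have hsum : Tendsto (fun n : ℕ => ∑ j ∈ Finset.range (n ^ 2), ∫ ω, Dterm b (ug γ c n ω) j ∂P)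
      atTop (𝓝 0) := by
    have hs : Summable fun j : ℕ => 3 * Real.exp b * ((1 + (j:ℝ) / 8) ^ 2)⁻¹ := by
      apply Summable.mul_left
      have h1 : Summable fun j : ℕ => 64 * (((j + 1 : ℕ) : ℝ) ^ 2)⁻¹ :=
        ((summable_nat_add_iff 1).2 (Real.summable_nat_pow_inv.2 one_lt_two)).mul_left 64
      refine Summable.of_nonneg_of_le (fun j => by positivity) (fun j => ?_) h1
      have : (64:ℝ) * (((j + 1 : ℕ) : ℝ) ^ 2)⁻¹ = ((((j + 1 : ℕ) : ℝ) / 8) ^ 2)⁻¹ := by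
        rw [div_pow, inv_div]; norm_num [div_eq_mul_inv]
      rw [this]
      gcongr
      push_cast
      linarith
    have h := tendsto_tsum_of_dominated_convergence (𝓕 := atTop)
      (f := fun (n : ℕ) (j : ℕ) => if j ∈ Finset.range (n^2) then
        ∫ ω, Dterm b (ug γ c n ω) j ∂P else 0) (g := fun _ => (0:ℝ)) hs (fun j => ?_) ?_
    · rw [tsum_zero] at h
      refine h.congr fun n => ?_
      rw [tsum_eq_sum (s := Finset.range (n^2)) (fun j hj => by rw [if_neg hj])]
      exact Finset.sum_congr rfl fun j hj => by rw [if_pos hj]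
    · refine squeeze_zero_norm (fun n => ?_) ((hterm j).norm.trans_eq ?_)
      · split_ifs
        · exact le_rfl
        · simp
      · simp
    · filter_upwards [eventually_gt_atTop 0] with n hn j
      split_ifs
      · exact hbound n j hn
      · rw [norm_zero]; positivity
  have := (hsum.const_add (Real.exp 1)).add hRlim
  simpa using this

end DD

namespace DD

open scoped Topology NNReal

variable {Ω : Type*} [MeasurableSpace Ω]

lemma lim_max {z : ℕ → ℝ} {V : ℝ} (h : ∀ η > 0, ∀ᶠ n in atTop, z n ≤ V + η) :
    Tendsto (fun n => max (z n) V) atTop (𝓝 V) := by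
  rw [tendsto_order]
  constructor
  · intro x hx
    exact Eventually.of_forall fun n => lt_of_lt_of_le hx (le_max_right _ _)
  · intro x hx
    filter_upwards [h ((x - V) / 2) (by linarith)] with n hn
    exact max_lt (by linarith) hx

lemma mean_le {P : Measure Ω} [IsProbabilityMeasure P] {Z : ℕ → Ω → ℝ} {V : Ω → ℝ} {C L : ℝ}
    (hZ : ∀ n, Measurable (Z n)) (hV : Measurable V) (hZC : ∀ n ω, |Z n ω| ≤ C)
    (hVC : ∀ ω, |V ω| ≤ C) (hlim : Tendsto (fun n => ∫ ω, Z n ω ∂P) atTop (𝓝 L))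
    (h : ∀ᵐ ω ∂P, ∀ η > 0, ∀ᶠ n in atTop, Z n ω ≤ V ω + η) : L ≤ ∫ ω, V ω ∂P := by
  have hb : ∀ n ω, |max (Z n ω) (V ω)| ≤ C := fun n ω =>
    (abs_max_le_max_abs_abs).trans (max_le (hZC n ω) (hVC ω))
  have hm : ∀ n, Measurable fun ω => max (Z n ω) (V ω) := fun n => (hZ n).max hV
  have h1 : Tendsto (fun n => ∫ ω, max (Z n ω) (V ω) ∂P) atTop (𝓝 (∫ ω, V ω ∂P)) := by
    apply tendsto_integral_of_dominated_convergence (fun _ => C)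
    · exact fun n => (hm n).aestronglyMeasurable
    · exact integrable_const _
    · exact fun n => ae_of_all _ fun ω => hb n ω
    · filter_upwards [h] with ω hω
      exact lim_max hω
  refine le_of_tendsto_of_tendsto' hlim h1 fun n => ?_
  exact integral_mono (integrable_bdd (hZ n) (hZC n)) (integrable_bdd (hm n) (hb n))
    fun ω => le_max_left _ _

lemma frequently_meas {α : Type*} [MeasurableSpace α] {p : ℕ → α → Prop}
    (hp : ∀ n, MeasurableSet {x | p n x}) : MeasurableSet {x | ∃ᶠ n in atTop, p n x} := by
  have : {x | ∃ᶠ n in atTop, p n x} = ⋂ N, ⋃ n, ⋃ (_ : N ≤ n), {x | p n x} := by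
    ext x
    simp only [mem_setOf_eq, mem_iInter, mem_iUnion, frequently_atTop, exists_prop]
  rw [this]
  exact MeasurableSet.iInter fun N => MeasurableSet.iUnion fun n => MeasurableSet.iUnion fun _ => hp n

lemma eventually_meas {α : Type*} [MeasurableSpace α] {p : ℕ → α → Prop}
    (hp : ∀ n, MeasurableSet {x | p n x}) : MeasurableSet {x | ∀ᶠ n in atTop, p n x} := by
  have : {x | ∀ᶠ n in atTop, p n x} = ⋃ N, ⋂ n, ⋂ (_ : N ≤ n), {x | p n x} := by
    ext x
    simp only [mem_setOf_eq, mem_iInter, mem_iUnion, eventually_atTop]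
  rw [this]
  exact MeasurableSet.iUnion fun N => MeasurableSet.iInter fun n => MeasurableSet.iInter fun _ => hp n

/-- Before the first drawdown, the level `a + 1` is passed. -/
def Sp (γ : ℝ → Ω → EuclideanSpace ℝ (Fin 4)) (a : ℝ) : Set Ω :=
  {ω | ∀ s t, 0 ≤ s → s ≤ t → 1 ≤ sqBessel4 γ s ω - sqBessel4 γ t ω →
    ∃ r, 0 ≤ r ∧ r ≤ t ∧ a + 1 < sqBessel4 γ r ω}

/-- The approximating process. -/
noncomputable def Zg (γ : ℝ → Ω → EuclideanSpace ℝ (Fin 4)) (b c : ℝ) (n : ℕ) (ω : Ω) : ℝ :=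
  Zseq b (smp (fun t => sqBessel4 γ t ω / c) n) (n ^ 2)

lemma Zg_meas {P : Measure Ω} {γ : ℝ → Ω → EuclideanSpace ℝ (Fin 4)}
    (hγ : IsStdBMVec 4 P γ) (b c : ℝ) (n : ℕ) : Measurable (Zg γ b c n) :=
  Zseq_meas b (fun j => (U_meas hγ _).div_const c) _

lemma Zg_abs_le (γ : ℝ → Ω → EuclideanSpace ℝ (Fin 4)) {b : ℝ} (hb : 1 ≤ b) (c : ℝ) (n : ℕ)
    (ω : Ω) : |Zg γ b c n ω| ≤ 3 * Real.exp b := Zseq_abs_le hb _ _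

lemma ratio_le {b : ℝ} (hb : 1 < b) : Real.exp b / b ≤ 3 * Real.exp b := by
  rw [div_le_iff₀ (by linarith)]
  nlinarith [Real.exp_pos b]

lemma lower {P : Measure Ω} [IsProbabilityMeasure P] {γ : ℝ → Ω → EuclideanSpace ℝ (Fin 4)}
    (hγ : IsStdBMVec 4 P γ) {a b : ℝ} (ha : 0 < a) (hb : a + 1 < b) :
    ∃ S : Set Ω, MeasurableSet S ∧ S ⊆ Sp γ a ∧ b * Real.exp (1 - b) ≤ P.real S := by
  have hb1 : 1 < b := by linarith
  have hb0 : 0 < b := by linarith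
  obtain ⟨c, hc1, hc2⟩ : ∃ c, (a + 1) / b < c ∧ c < 1 :=
    exists_between ((div_lt_one hb0).2 hb)
  have hc : 0 < c := lt_trans (by positivity) hc1
  set S : Set Ω := {ω | ∃ᶠ n in atTop, 0 < Zg γ b c n ω} with hS
  have mS : MeasurableSet S :=
    frequently_meas fun n => measurableSet_lt measurable_const (Zg_meas hγ b c n)
  have hcont : ∀ ω, Continuous fun t => sqBessel4 γ t ω / c := fun ω => (U_cont hγ ω).div_const c
  have h0 : ∀ ω, (fun t => sqBessel4 γ t ω / c) 0 = 0 := fun ω => by simp [U_zero hγ]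
  refine ⟨S, mS, ?_, ?_⟩
  · intro ω hω
    by_contra hn
    simp only [Sp, mem_setOf_eq, not_forall, not_exists, not_and, not_lt] at hn
    obtain ⟨s, t, hs, hst, hd, hr⟩ := hn
    have := path_lower (hcont ω) (h0 ω) hb1 hs hst (by
        show 1 < sqBessel4 γ s ω / c - sqBessel4 γ t ω / c
        rw [← sub_div, lt_div_iff₀ hc]; linarith)
      (fun r => div_nonneg (sq_nonneg _) hc.le) ((a + 1) / c)
      (by rw [div_lt_iff₀ hc]; rw [div_lt_iff₀ hb0] at hc1; linarith)
      (fun r h1 h2 => div_le_div_of_nonneg_right (hr r h1 h2) hc.le)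
    exact hω (this.mono fun n hn => not_lt.2 hn)
  · have hV : Measurable (S.indicator fun _ => Real.exp b / b) := measurable_const.indicator mS
    have h1 := mean_le (P := P) (C := 3 * Real.exp b) (Zg_meas hγ b c) hV
      (Zg_abs_le γ hb1.le c) (fun ω => ?_) (EZ_tendsto hγ hb1 hc) ?_
    · rw [integral_indicator_const _ mS, smul_eq_mul] at h1
      have e : Real.exp (1 - b) = Real.exp 1 / Real.exp b := Real.exp_sub _ _
      rw [e]
      have : Real.exp 1 * b / Real.exp b ≤ P.real S := by
        rw [div_le_iff₀ (Real.exp_pos b)]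
        calc Real.exp 1 * b ≤ (P.real S * (Real.exp b / b)) * b := by gcongr
          _ = _ := by field_simp
      calc _ = Real.exp 1 * b / Real.exp b := by ring
        _ ≤ _ := this
    · by_cases h : ω ∈ S
      · rw [indicator_of_mem h, abs_of_pos (by positivity)]; exact ratio_le hb1
      · rw [indicator_of_notMem h, abs_zero]; positivity
    · filter_upwards [U_unbdd hγ] with ω hω η hη
      by_cases h : ω ∈ S
      · rw [indicator_of_mem h]
        obtain ⟨T, hT, hTb⟩ := hω (b * c)
        exact path_lower' (hcont ω) (h0 ω) hb1 hT (by
          show b < sqBessel4 γ T ω / c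
          rwa [lt_div_iff₀ hc]) hη
      · rw [indicator_of_notMem h]
        have : ∀ᶠ n in atTop, ¬ (0 < Zg γ b c n ω) := not_frequently.1 h
        filter_upwards [this] with n hn
        linarith

/-- Almost surely, the level at the first drawdown is larger than one. -/
lemma ae_Sp {P : Measure Ω} [IsProbabilityMeasure P] {γ : ℝ → Ω → EuclideanSpace ℝ (Fin 4)}
    (hγ : IsStdBMVec 4 P γ) : ∀ᵐ ω ∂P, ∃ ε : ℝ, 0 < ε ∧ ω ∈ Sp γ ε := by
  have h1 : ∀ m : ℕ, ∃ S : Set Ω, MeasurableSet S ∧ S ⊆ Sp γ (1 / ((m : ℝ) + 1)) ∧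
      (1 + 2 * (1 / ((m : ℝ) + 1))) * Real.exp (1 - (1 + 2 * (1 / ((m : ℝ) + 1)))) ≤ P.real S := by
    intro m
    have : 0 < 1 / ((m : ℝ) + 1) := by positivity
    exact lower hγ this (by linarith)
  choose S mS hS hP using h1
  have hlim : Tendsto (fun m : ℕ => (1 + 2 * (1 / ((m : ℝ) + 1))) *
      Real.exp (1 - (1 + 2 * (1 / ((m : ℝ) + 1))))) atTop (𝓝 1) := by
    have h2 : Continuous fun x : ℝ => (1 + 2 * x) * Real.exp (1 - (1 + 2 * x)) := by fun_prop
    have h3 := (h2.tendsto 0).comp (tendsto_one_div_add_atTop_nhds_zero_nat (𝕜 := ℝ))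
    simpa [Function.comp_def] using h3
  have h4 : 1 ≤ P.real (⋃ m, S m) := by
    refine le_of_tendsto' hlim fun m => (hP m).trans ?_
    exact measureReal_mono (subset_iUnion S m)
  have h5 : P (⋃ m, S m) = 1 := by
    apply le_antisymm prob_le_one
    rw [← ENNReal.ofReal_one]
    exact (ENNReal.ofReal_le_iff_le_toReal (measure_ne_top _ _)).2 h4
  have h6 : ∀ᵐ ω ∂P, ω ∈ ⋃ m, S m := by
    exact (mem_ae_iff_prob_eq_one (MeasurableSet.iUnion mS)).2 h5
  filter_upwards [h6] with ω hω
  obtain ⟨m, hm⟩ := mem_iUnion.1 hω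
  exact ⟨1 / ((m : ℝ) + 1), by positivity, hS m hm⟩

/-- The first drawdown is attained. -/
lemma first_dd {f : ℝ → ℝ} (hf : Continuous f) (h : ∃ s t, 0 ≤ s ∧ s ≤ t ∧ 1 ≤ f s - f t) :
    ∃ s₀ τ, 0 ≤ s₀ ∧ s₀ < τ ∧ f s₀ - f τ = 1 ∧ (∀ r, 0 ≤ r → r ≤ τ → f r ≤ f τ + 1) ∧
      ∀ s t, 0 ≤ s → s ≤ t → 1 ≤ f s - f t → τ ≤ t := by
  obtain ⟨s1, T, hs1, hsT, hd⟩ := h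
  set K : Set (ℝ × ℝ) := {p | 0 ≤ p.1 ∧ p.1 ≤ p.2 ∧ p.2 ≤ T ∧ 1 ≤ f p.1 - f p.2} with hK
  have hKc : IsCompact K := by
    refine IsCompact.of_isClosed_subset (isCompact_Icc.prod isCompact_Icc : IsCompact
      (Icc 0 T ×ˢ Icc 0 T)) ?_ ?_
    · have hc4 : IsClosed {p : ℝ × ℝ | 1 ≤ f p.1 - f p.2} :=
        isClosed_le continuous_const (by fun_prop)
      exact (isClosed_le continuous_const continuous_fst).inter
        ((isClosed_le continuous_fst continuous_snd).inter
        ((isClosed_le continuous_snd continuous_const).inter hc4))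
    · rintro ⟨p, q⟩ ⟨h1, h2, h3, h4⟩
      exact ⟨⟨h1, h2.trans h3⟩, ⟨h1.trans h2, h3⟩⟩
  obtain ⟨⟨s0, τ⟩, ⟨h1, h2, h3, h4⟩, hmin⟩ :=
    hKc.exists_isMinOn ⟨(s1, T), hs1, hsT, le_rfl, hd⟩ continuous_snd.continuousOn
  simp only at h1 h2 h3 h4
  have hmin' : ∀ s t, 0 ≤ s → s ≤ t → 1 ≤ f s - f t → τ ≤ t := by
    intro s t ha hb hc
    rcases le_or_gt t T with h | h
    · exact hmin (a := (s, t)) ⟨ha, hb, h, hc⟩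
    · exact h3.trans h.le
  have hlt : ∀ r, 0 ≤ r → r ≤ τ → f r ≤ f τ + 1 := by
    intro r hr0 hrτ
    by_contra hcon
    push Not at hcon
    have hrne : r < τ := lt_of_le_of_ne hrτ (by rintro rfl; linarith)
    have he : ∀ᶠ t in 𝓝[<] τ, f t < f r - 1 :=
      (hf.continuousAt.tendsto.mono_left nhdsWithin_le_nhds).eventually_lt_const (by linarith)
    have he2 : ∀ᶠ t in 𝓝[<] τ, r < t := by
      exact (eventually_gt_nhds hrne).filter_mono nhdsWithin_le_nhds
    obtain ⟨t, ⟨ht1, ht2⟩, ht3⟩ := ((he.and he2).and self_mem_nhdsWithin).exists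
    have := hmin' r t hr0 ht2.le (by linarith)
    exact absurd ht3 (not_lt.2 this)
  refine ⟨s0, τ, h1, lt_of_le_of_ne h2 (by rintro rfl; linarith), ?_, hlt, hmin'⟩
  have := hlt s0 h1 h2
  linarith

lemma upper {P : Measure Ω} [IsProbabilityMeasure P] {γ : ℝ → Ω → EuclideanSpace ℝ (Fin 4)}
    (hγ : IsStdBMVec 4 P γ) {a : ℝ} (ha : 0 < a) :
    P (Sp γ a) ≤ ENNReal.ofReal ((a + 1) * Real.exp (-a)) := by
  set b : ℝ := a + 1 with hbdef
  have hb1 : 1 < b := by linarith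
  have hb0 : 0 < b := by linarith
  set S : Set Ω := {ω | ∀ᶠ n in atTop, Real.exp b / b ≤ Zg γ b 1 n ω} with hS
  have mS : MeasurableSet S :=
    eventually_meas fun n => measurableSet_le measurable_const (Zg_meas hγ b 1 n)
  have hcont : ∀ ω, Continuous fun t => sqBessel4 γ t ω / 1 := fun ω => (U_cont hγ ω).div_const 1
  have h0 : ∀ ω, (fun t => sqBessel4 γ t ω / 1) 0 = 0 := fun ω => by simp [U_zero hγ]
  have hsub : ∀ᵐ ω ∂P, ω ∈ Sp γ a → ω ∈ S := by
    filter_upwards [U_unbdd hγ] with ω hω hSp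
    obtain ⟨T, hT, hTb, hno⟩ : ∃ T, 0 ≤ T ∧ b < sqBessel4 γ T ω ∧ ∀ s t, 0 ≤ s → s ≤ t → t ≤ T →
        sqBessel4 γ s ω - sqBessel4 γ t ω < 1 := by
      by_cases hdd : ∃ s t, 0 ≤ s ∧ s ≤ t ∧ 1 ≤ sqBessel4 γ s ω - sqBessel4 γ t ω
      · obtain ⟨s0, τ, h1, h2, h3, h4, h5⟩ := first_dd (U_cont hγ ω) hdd
        obtain ⟨r, hr0, hrτ, hr⟩ := hSp s0 τ h1 h2.le h3.ge
        refine ⟨s0, h1, ?_, ?_⟩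
        · have := h4 r hr0 hrτ
          linarith
        · intro s t hs hst htT
          by_contra hcon
          have := h5 s t hs hst (not_lt.1 hcon)
          linarith
      · push Not at hdd
        obtain ⟨T, hT, hTb⟩ := hω b
        exact ⟨T, hT, hTb, fun s t hs hst _ => hdd s t hs hst⟩
    exact path_upper (hcont ω) (h0 ω) hb1 hT (by simpa using hTb)
      (fun s t hs hst htT => by simpa using hno s t hs hst htT)
  have h1 : P (Sp γ a) ≤ P S := measure_mono_ae hsub
  refine h1.trans ?_
  rw [← ofReal_measureReal]
  apply ENNReal.ofReal_le_ofReal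
  have hV : Measurable (S.indicator fun _ => -(Real.exp b / b)) := measurable_const.indicator mS
  have hlim : Tendsto (fun n => ∫ ω, -Zg γ b 1 n ω ∂P) atTop (𝓝 (-Real.exp 1)) := by
    simp_rw [integral_neg]
    exact (EZ_tendsto hγ hb1 one_pos).neg
  have h2 := mean_le (P := P) (C := 3 * Real.exp b) (fun n => (Zg_meas hγ b 1 n).neg) hV
    (fun n ω => by rw [Pi.neg_apply, abs_neg]; exact Zg_abs_le γ hb1.le 1 n ω) (fun ω => ?_) hlim ?_
  · rw [integral_indicator_const _ mS, smul_eq_mul] at h2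
    have e : Real.exp (-a) = Real.exp 1 / Real.exp b := by
      rw [← Real.exp_sub]; congr 1; rw [hbdef]; ring
    rw [e]
    have : P.real S ≤ Real.exp 1 * b / Real.exp b := by
      rw [le_div_iff₀ (Real.exp_pos b)]
      calc P.real S * Real.exp b = (P.real S * (Real.exp b / b)) * b := by field_simp
        _ ≤ _ := by gcongr; linarith
    calc _ ≤ Real.exp 1 * b / Real.exp b := this
      _ = _ := by ring
  · by_cases h : ω ∈ S
    · rw [indicator_of_mem h, abs_neg, abs_of_pos (by positivity)]; exact ratio_le hb1
    · rw [indicator_of_notMem h, abs_zero]; positivity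
  · filter_upwards [U_unbdd hγ, ae_Sp hγ] with ω hω ⟨ε, hε, hSp⟩ η hη
    by_cases h : ω ∈ S
    · rw [indicator_of_mem h]
      have : ∀ᶠ n in atTop, Real.exp b / b ≤ Zg γ b 1 n ω := h
      filter_upwards [this] with n hn
      simp only [Pi.neg_apply]
      linarith
    · rw [indicator_of_notMem h]
      obtain ⟨T, hT, hTb⟩ := hω b
      have := path_upper' (hcont ω) (h0 ω) hb1 hT (by simpa using hTb) hε (fun s t hs hst hd => by
        simp only [div_one] at hd ⊢
        obtain ⟨r, hr0, hrt, hr⟩ := hSp s t hs hst hd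
        exact ⟨r, hr0, hrt, by linarith⟩) hη
      filter_upwards [this] with n hn
      have hn' : -η ≤ Zg γ b 1 n ω := hn
      simp only [Pi.neg_apply]
      linarith

lemma lower' {P : Measure Ω} [IsProbabilityMeasure P] {γ : ℝ → Ω → EuclideanSpace ℝ (Fin 4)}
    (hγ : IsStdBMVec 4 P γ) {a : ℝ} (ha : 0 < a) :
    ENNReal.ofReal ((a + 1) * Real.exp (-a)) ≤ P (Sp γ a) := by
  have h1 : ∀ b, a + 1 < b → ENNReal.ofReal (b * Real.exp (1 - b)) ≤ P (Sp γ a) := by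
    intro b hb
    obtain ⟨S, _, hS, hP⟩ := lower hγ ha hb
    exact ((ENNReal.ofReal_le_iff_le_toReal (measure_ne_top _ _)).2 hP).trans (measure_mono hS)
  have h2 : Tendsto (fun b : ℝ => ENNReal.ofReal (b * Real.exp (1 - b))) (𝓝[>] (a+1))
      (𝓝 (ENNReal.ofReal ((a + 1) * Real.exp (1 - (a + 1))))) := by
    have hc : Continuous fun b : ℝ => ENNReal.ofReal (b * Real.exp (1 - b)) :=
      ENNReal.continuous_ofReal.comp (by fun_prop)
    exact (hc.tendsto _).mono_left nhdsWithin_le_nhds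
  have e : 1 - (a + 1) = -a := by ring
  rw [e] at h2
  exact le_of_tendsto h2 (eventually_nhdsWithin_of_forall fun b hb => h1 b hb)

/-- A drawdown occurs almost surely. -/
lemma no_dd_null {P : Measure Ω} [IsProbabilityMeasure P] {γ : ℝ → Ω → EuclideanSpace ℝ (Fin 4)}
    (hγ : IsStdBMVec 4 P γ) :
    ∀ᵐ ω ∂P, ∃ s t, 0 ≤ s ∧ s ≤ t ∧ 1 ≤ sqBessel4 γ s ω - sqBessel4 γ t ω := by
  rw [ae_iff]
  set N : Set Ω := {ω | ¬ ∃ s t, 0 ≤ s ∧ s ≤ t ∧ 1 ≤ sqBessel4 γ s ω - sqBessel4 γ t ω} with hN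
  have h1 : ∀ m : ℕ, P N ≤ ENNReal.ofReal ((((m:ℝ)+1) + 1) * Real.exp (-((m:ℝ)+1))) := by
    intro m
    refine (measure_mono ?_).trans (upper hγ (a := (m:ℝ)+1) (by positivity))
    intro ω hω s t hs hst hd
    exact absurd ⟨s, t, hs, hst, hd⟩ hω
  have h2 : Tendsto (fun x : ℝ => (x + 1) * Real.exp (-x)) atTop (𝓝 0) := by
    have h3 := (Real.tendsto_pow_mul_exp_neg_atTop_nhds_zero 1).add
      (Real.tendsto_pow_mul_exp_neg_atTop_nhds_zero 0)
    rw [add_zero] at h3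
    refine h3.congr fun x => ?_
    ring
  have h3 : Tendsto (fun m : ℕ => (m:ℝ) + 1) atTop atTop :=
    tendsto_atTop_add_const_right _ _ tendsto_natCast_atTop_atTop
  have h4 := ENNReal.tendsto_ofReal (h2.comp h3)
  rw [ENNReal.ofReal_zero] at h4
  exact le_antisymm (ge_of_tendsto' h4 h1) zero_le

lemma ddTime_eq {P : Measure Ω} {γ : ℝ → Ω → EuclideanSpace ℝ (Fin 4)}
    (hγ : IsStdBMVec 4 P γ) {ω : Ω} {s₀ τ : ℝ} (h0 : 0 ≤ s₀) (hs : s₀ < τ)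
    (h1 : sqBessel4 γ s₀ ω - sqBessel4 γ τ ω = 1)
    (hmin : ∀ s t, 0 ≤ s → s ≤ t → 1 ≤ sqBessel4 γ s ω - sqBessel4 γ t ω → τ ≤ t) :
    ddTime 1 (sqBessel4 γ) ω = τ := by
  have hf := U_cont hγ ω
  have hbdd : ∀ t, BddAbove (range fun s : Icc (0:ℝ) t => sqBessel4 γ s ω) := by
    intro t
    have h := (isCompact_Icc (a := (0:ℝ)) (b := t)).bddAbove_image hf.continuousOn
    rwa [image_eq_range] at h
  unfold ddTime
  apply IsLeast.csInf_eq
  constructor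
  · refine ⟨h0.trans hs.le, ?_⟩
    have : sqBessel4 γ s₀ ω ≤ runMax (sqBessel4 γ) τ ω :=
      le_ciSup (hbdd τ) ⟨s₀, h0, hs.le⟩
    linarith
  · rintro t ⟨ht0, ht⟩
    obtain ⟨s, hsI, hsmax⟩ := isCompact_Icc.exists_isMaxOn ⟨(0:ℝ), ⟨le_rfl, ht0⟩⟩
      (hf.continuousOn (s := Icc 0 t))
    have : Nonempty (Icc (0:ℝ) t) := ⟨⟨0, le_rfl, ht0⟩⟩
    have h2 : runMax (sqBessel4 γ) t ω ≤ sqBessel4 γ s ω :=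
      ciSup_le fun r => hsmax r.2
    exact hmin s t hsI.1 hsI.2 (by linarith)

theorem main {P : Measure Ω} [IsProbabilityMeasure P]
    {γ : ℝ → Ω → EuclideanSpace ℝ (Fin 4)} (hγ : IsStdBMVec 4 P γ) {a : ℝ} (ha : 0 < a) :
    P {ω | a < sqBessel4 γ (ddTime 1 (sqBessel4 γ) ω) ω}
      = ENNReal.ofReal ((a + 1) * Real.exp (-a)) := by
  have h1 : P {ω | a < sqBessel4 γ (ddTime 1 (sqBessel4 γ) ω) ω} = P (Sp γ a) := by
    apply measure_congr
    filter_upwards [no_dd_null hγ] with ω hω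
    obtain ⟨s0, τ, h1, h2, h3, h4, h5⟩ := first_dd (U_cont hγ ω) hω
    have hτ := ddTime_eq hγ h1 h2 h3 h5
    apply propext
    show a < sqBessel4 γ (ddTime 1 (sqBessel4 γ) ω) ω ↔ ω ∈ Sp γ a
    rw [hτ]
    constructor
    · intro h s t hs hst hd
      exact ⟨s0, h1, h2.le.trans (h5 s t hs hst hd), by linarith⟩
    · intro h
      obtain ⟨r, hr0, hrτ, hr⟩ := h s0 τ h1 h2.le h3.ge
      have := h4 r hr0 hrτ
      linarith
  rw [h1]
  exact le_antisymm (upper hγ ha) (lower' hγ ha)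

end DD

/-- for a squared four-dimensional Bessel process `U` started at `0` and
`τ₁ := inf {t ≥ 0 : Ū(t) - U(t) ≥ 1}`, one has `P{U(τ₁) > a} = (a+1) e^{-a}` for all `a > 0`. -/
theorem sqBessel4_at_drawdown_time_law
    {Ω : Type*} [MeasurableSpace Ω] (P : Measure Ω) [IsProbabilityMeasure P]
    (γ : ℝ → Ω → EuclideanSpace ℝ (Fin 4)) (hγ : IsStdBMVec 4 P γ)
    (a : ℝ) (ha : 0 < a) :
    P {ω | a < sqBessel4 γ (ddTime 1 (sqBessel4 γ) ω) ω}
      = ENNReal.ofReal ((a + 1) * Real.exp (-a)) := by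
  exact DD.main hγ ha
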